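/- Let A_{N,1}, …, A_{N,L} be independent families of N×N random matrices that are uniformly bounded in operator norm, each of which is permutation invariant. Fix n ≥ 2 and ℓ_1, …, ℓ_n ∈ {1,…,L} with ℓ_i ≠ ℓ_{i+1} for 1 ≤ i ≤ n−1. For each N and each i ∈ {1,…,n}, let P_{N,i} = D_{N,0,i} X_{k_{N,i}(1)} D_{N,1,i} ⋯ X_{k_{N,i}(d_{N,i})} D_{N,d_{N,i},i} be a monomial in noncommuting indeterminates (X_k)_{k∈K} whose coefficients D_{N,j,i} are deterministic N×N diagonal matrices, with d_{N,i} ≤ d and ‖D_{N,j,i}‖ ≤ C′ for constants d, C′ independent of N. Set M_{N,i} = P_{N,i}(A_{N,ℓ_i}) and ε_N = Δ[(M_{N,1} − ΔM_{N,1}) ⋯ (M_{N,n} − ΔM_{N,n})]. Then for every integer p ≥ 1 and every δ > 0, P[(1/N) Tr((ε_N ε_N*)^p) > δ] → 0 as N → ∞; that is, the normalized Schatten norms of ε_N converge to zero in probability. -/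

import Mathlib

open MeasureTheory ProbabilityTheory Filter Matrix Asymptotics
open scoped BigOperators ENNReal
open scoped Classical

noncomputable section

/-- The diagonal projection `Δ` on `N × N` complex matrices. -/
def dproj {N : ℕ} (A : Matrix (Fin N) (Fin N) ℂ) : Matrix (Fin N) (Fin N) ℂ :=
  Matrix.of fun i j => if i = j then A i j else 0

/-- The operator norm of a matrix acting on `ℓ²({1,…,N})`. -/
def matOpNorm {N : ℕ} (A : Matrix (Fin N) (Fin N) ℂ) : ℝ :=
  ‖Matrix.toEuclideanCLM (𝕜 := ℂ) A‖

/-! ### Multigraph combinatorics -/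

section Graph

variable {V E : Type} (src tgt : E → V)

/-- Adjacency through an edge avoiding a forbidden set `F` of edges
(direction is ignored). -/
def adjOn (F : Set E) (a b : V) : Prop :=
  ∃ e, e ∉ F ∧ ((src e = a ∧ tgt e = b) ∨ (src e = b ∧ tgt e = a))

/-- Reachability in the graph, using only edges outside `F`. -/
def reachOn (F : Set E) : V → V → Prop :=
  Relation.ReflTransGen (adjOn src tgt F)

lemma adjOn_symm (F : Set E) : Symmetric (adjOn src tgt F) := by
  rintro a b ⟨e, he, h⟩
  exact ⟨e, he, h.symm⟩

/-- The setoid of connectivity using edges outside `F`. -/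
def connSetoid (F : Set E) : Setoid V :=
  ⟨reachOn src tgt F,
    ⟨fun _ => Relation.ReflTransGen.refl,
     fun h => (@Relation.ReflTransGen.stdSymm _ _ ⟨fun _ _ h' => adjOn_symm src tgt F h'⟩).symm _ _ h,
     fun h h' => Relation.ReflTransGen.trans h h'⟩⟩

/-- Number of connected components of the graph with the edges in `F` deleted. -/
def ncompAvoiding (F : Set E) : ℕ :=
  Nat.card (Quotient (connSetoid src tgt F))

/-- Number of connected components. -/
def ncomp : ℕ := ncompAvoiding src tgt ∅

/-- The graph is connected. -/
def IsConnectedGraph : Prop := ∀ a b : V, reachOn src tgt ∅ a b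

/-- A cut edge (bridge): deleting it disconnects its endpoints. -/
def IsCutEdge (e : E) : Prop := ¬ reachOn src tgt {e} (src e) (tgt e)

/-- The set of cut edges. -/
def cutEdges : Set E := {e | IsCutEdge src tgt e}

/-- The setoid whose classes are the two-edge connected components
(connected components after deleting all cut edges). -/
def teccSetoid : Setoid V := connSetoid src tgt (cutEdges src tgt)

/-- Degree, in the forest of two-edge connected components, of a
two-edge connected component: the number of cut edges incident to it. -/
def teccDeg (c : Quotient (teccSetoid src tgt)) : ℕ :=
  Nat.card {e : E // IsCutEdge src tgt e ∧
    (Quotient.mk (teccSetoid src tgt) (src e) = c ∨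
      Quotient.mk (teccSetoid src tgt) (tgt e) = c)}

/-- `𝔣(G)`: the number of leaves of the forest of two-edge connected components,
single-vertex trees of the forest counting twice. -/
def frak : ℕ :=
  Nat.card {c : Quotient (teccSetoid src tgt) // teccDeg src tgt c = 1} +
    2 * Nat.card {c : Quotient (teccSetoid src tgt) // teccDeg src tgt c = 0}

end Graph

/-! ### Graph monomials -/

/-- A graph monomial: a finite directed multigraph with two roots and edges
labelled by a family index in `Fin L` and an index in `K`.  (Connectedness is
required separately via `IsConnectedGraph`.) -/
structure GraphMonomial (L : ℕ) (K : Type) where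
  V : Type
  E : Type
  fintV : Fintype V
  fintE : Fintype E
  src : E → V
  tgt : E → V
  vin : V
  vout : V
  labL : E → Fin L
  labK : E → K

attribute [instance] GraphMonomial.fintV GraphMonomial.fintE

namespace GraphMonomial

variable {L : ℕ} {K : Type} (g : GraphMonomial L K)

/-- Evaluation of a graph monomial in a collection of matrices. -/
def eval {N : ℕ} (A : Fin L → K → Matrix (Fin N) (Fin N) ℂ) :
    Matrix (Fin N) (Fin N) ℂ :=
  Matrix.of fun i j => ∑ φ : g.V → Fin N,
    if φ g.vin = j ∧ φ g.vout = i then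
      ∏ e : g.E, A (g.labL e) (g.labK e) (φ (g.tgt e)) (φ (g.src e))
    else 0

/-- The starting vertex of a step `(e, b)`: `e` traversed forward if `b = true`,
backward otherwise. -/
def stepSrc (s : g.E × Bool) : g.V := if s.2 then g.src s.1 else g.tgt s.1

/-- The ending vertex of a step. -/
def stepTgt (s : g.E × Bool) : g.V := if s.2 then g.tgt s.1 else g.src s.1

/-- A simple cycle of the underlying undirected multigraph: a nonempty cyclic
sequence of steps with pairwise distinct edges and pairwise distinct vertices. -/
def IsSimpleCycle (c : List (g.E × Bool)) : Prop :=
  ∃ h : c ≠ [],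
    (∀ i : Fin c.length,
      g.stepTgt (c.get i) =
        g.stepSrc (c.get ⟨((i : ℕ) + 1) % c.length,
          Nat.mod_lt _ (List.length_pos_iff.mpr h)⟩)) ∧
    (c.map Prod.fst).Nodup ∧ (c.map g.stepSrc).Nodup

/-- A cycle is directed when it traverses all its edges consistently with
their orientations (one way or the other). -/
def IsDirectedCycleList (c : List (g.E × Bool)) : Prop :=
  (∀ s ∈ c, s.2 = true) ∨ (∀ s ∈ c, s.2 = false)

/-- `S` is the edge set of some simple cycle. -/
def IsCycleEdgeSet (S : Finset g.E) : Prop :=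
  ∃ c, g.IsSimpleCycle c ∧ (c.map Prod.fst).toFinset = S

/-- The underlying graph is an oriented cactus: it is connected, every simple
cycle is directed, and every edge belongs to exactly one simple cycle. -/
def IsOrientedCactus : Prop :=
  IsConnectedGraph g.src g.tgt ∧
  (∀ c, g.IsSimpleCycle c → g.IsDirectedCycleList c) ∧
  (∀ e : g.E, ∃! S : Finset g.E, g.IsCycleEdgeSet S ∧ e ∈ S)

/-- A cactus-type monomial: an oriented cactus whose input and output coincide. -/
def IsCactusType : Prop := g.vin = g.vout ∧ g.IsOrientedCactus

/-- A member of `ℱ`: a directed simple path (oriented from the input, at the far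
right, to the output, at the far left) with oriented cacti attached to the
vertices of the path (the root of each cactus being a path vertex). -/
def IsPathCactusType : Prop :=
  IsConnectedGraph g.src g.tgt ∧
  ∃ (d : ℕ) (v : Fin (d + 1) → g.V) (f : Fin d → g.E),
    Function.Injective v ∧ Function.Injective f ∧
    (∀ j : Fin d, g.src (f j) = v j.succ ∧ g.tgt (f j) = v j.castSucc) ∧
    g.vin = v (Fin.last d) ∧ g.vout = v 0 ∧
    (∀ c, g.IsSimpleCycle c → g.IsDirectedCycleList c ∧ ∀ s ∈ c, s.1 ∉ Set.range f) ∧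
    (∀ e : g.E, e ∉ Set.range f →
      ∃! S : Finset g.E, g.IsCycleEdgeSet S ∧ e ∈ S) ∧
    (∀ w : g.V, ∃! j : Fin (d + 1), reachOn g.src g.tgt (Set.range f) w (v j))

end GraphMonomial
/-! ### Random matrices, expectations, test graphs -/

/-- The entries of the random matrix `X` are measurable. -/
def EntriesMeasurable {N : ℕ} {Ω : Type} [MeasurableSpace Ω]
    (X : Ω → Matrix (Fin N) (Fin N) ℂ) : Prop :=
  ∀ i j, Measurable fun ω => X ω i j

/-- The entries of the random matrix `X` are essentially bounded. -/
def EntriesBounded {N : ℕ} {Ω : Type} [MeasurableSpace Ω] (μ : Measure Ω)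
    (X : Ω → Matrix (Fin N) (Fin N) ℂ) : Prop :=
  ∃ C : ℝ, ∀ᵐ ω ∂μ, ∀ i j, ‖X ω i j‖ ≤ C

/-- The σ-algebra generated by the entries of the matrices of a family. -/
def famSigma {N : ℕ} {Ω K : Type} [MeasurableSpace Ω]
    (A : K → Ω → Matrix (Fin N) (Fin N) ℂ) : MeasurableSpace Ω :=
  ⨆ k : K, ⨆ i : Fin N, ⨆ j : Fin N,
    MeasurableSpace.comap (fun ω => A k ω i j) inferInstance

/-- Permutation invariance of a family of `N × N` random matrices. -/
def PermInvariant {N : ℕ} {Ω K : Type} [MeasurableSpace Ω] (μ : Measure Ω)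
    (A : K → Ω → Matrix (Fin N) (Fin N) ℂ) : Prop :=
  ∀ σ : Equiv.Perm (Fin N),
    Measure.map (fun ω => fun (k : K) (i j : Fin N) => A k ω (σ i) (σ j)) μ =
      Measure.map (fun ω => fun (k : K) (i j : Fin N) => A k ω i j) μ

/-- A test graph with matrix-valued edge labels. -/
structure TestGraph (N : ℕ) (Ω : Type) where
  V : Type
  E : Type
  fintV : Fintype V
  fintE : Fintype E
  src : E → V
  tgt : E → V
  lab : E → Ω → Matrix (Fin N) (Fin N) ℂ

attribute [instance] TestGraph.fintV TestGraph.fintE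

namespace TestGraph

variable {N : ℕ} {Ω : Type} [MeasurableSpace Ω]

/-- Number of connected components `c(T)` of a test graph. -/
def ncc (T : TestGraph N Ω) : ℕ := ncomp T.src T.tgt

/-- The (unnormalized) trace observable of a test graph. -/
def tauInner (T : TestGraph N Ω) (ω : Ω) : ℂ :=
  ∑ φ : T.V → Fin N, ∏ e : T.E, T.lab e ω (φ (T.tgt e)) (φ (T.src e))

/-- The (unnormalized) injective trace observable of a test graph. -/
def tau0Inner (T : TestGraph N Ω) (ω : Ω) : ℂ :=
  ∑ φ : T.V → Fin N,
    if Function.Injective φ then ∏ e : T.E, T.lab e ω (φ (T.tgt e)) (φ (T.src e)) else 0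

/-- `τ_N[T]`. -/
def tau (T : TestGraph N Ω) (μ : Measure Ω) : ℂ :=
  ((N : ℂ) ^ T.ncc)⁻¹ * ∫ ω, T.tauInner ω ∂μ

/-- `τ⁰_N[T]`. -/
def tau0 (T : TestGraph N Ω) (μ : Measure Ω) : ℂ :=
  ((N : ℂ) ^ T.ncc)⁻¹ * ∫ ω, T.tau0Inner ω ∂μ

/-- The quotient test graph `T^π` associated with a partition `π` of the
vertices of `T`. -/
def quot (T : TestGraph N Ω) (π : Setoid T.V) : TestGraph N Ω where
  V := Quotient π
  E := T.E
  fintV := @Quotient.fintype _ T.fintV π fun _ _ => Classical.propDecidable _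
  fintE := T.fintE
  src := fun e => Quotient.mk π (T.src e)
  tgt := fun e => Quotient.mk π (T.tgt e)
  lab := T.lab

end TestGraph

/-- Monomial `D₀ X_{k(1)} D₁ ⋯ X_{k(d)} D_d` evaluated in a family of matrices:
the coefficients are given as an arbitrary function `D : ℕ → Matrix`. -/
def monomialEval {K : Type} {N : ℕ} (A : K → Matrix (Fin N) (Fin N) ℂ)
    (dd : ℕ) (kk : ℕ → K) (D : ℕ → Matrix (Fin N) (Fin N) ℂ) :
    Matrix (Fin N) (Fin N) ℂ :=
  D 0 * (List.ofFn fun j : Fin dd => A (kk ((j : ℕ) + 1)) * D ((j : ℕ) + 1)).prod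

/-- The centered product `(M₁ - ΔM₁)(M₂ - ΔM₂)⋯(Mₙ - ΔMₙ)`. -/
def centeredProd {N n : ℕ} (M : Fin n → Matrix (Fin N) (Fin N) ℂ) :
    Matrix (Fin N) (Fin N) ℂ :=
  (List.ofFn fun i : Fin n => M i - dproj (M i)).prod

/-- Mutual independence of the families `A 1, …, A L` of random matrices. -/
def IndepFamilies {Ω K : Type} {L : ℕ} [MeasurableSpace Ω] (μ : Measure Ω)
    (A : (N : ℕ) → Fin L → K → Ω → Matrix (Fin N) (Fin N) ℂ) : Prop :=
  ∀ N : ℕ, ProbabilityTheory.iIndep (fun ℓ : Fin L => famSigma (A N ℓ)) μ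

/-- Uniform boundedness, in operator norm, of families of random matrices. -/
def UnifOpNormBound {Ω K : Type} {L : ℕ} [MeasurableSpace Ω] (μ : Measure Ω)
    (A : (N : ℕ) → Fin L → K → Ω → Matrix (Fin N) (Fin N) ℂ) : Prop :=
  ∃ C : ℝ, ∀ (N : ℕ) (ℓ : Fin L) (k : K), ∀ᵐ ω ∂μ, matOpNorm (A N ℓ k ω) ≤ C

/-- The growth bound (MS) for the family `A · ℓ`:
for all graph monomials `g₁, …, gₘ` labelled in the single family `ℓ` and having
equal input and output, `E[∏ᵢ Tr gᵢ(A_N)] = O(N^{Σᵢ 𝔣(gᵢ)/2})` as `N → ∞`. -/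
def MSBound {Ω K : Type} {L : ℕ} [MeasurableSpace Ω] (μ : Measure Ω)
    (A : (N : ℕ) → Fin L → K → Ω → Matrix (Fin N) (Fin N) ℂ) (ℓ : Fin L) : Prop :=
  ∀ (m : ℕ), 1 ≤ m → ∀ gs : Fin m → GraphMonomial L K,
    (∀ i : Fin m, IsConnectedGraph (gs i).src (gs i).tgt ∧
      (∀ e, (gs i).labL e = ℓ) ∧ (gs i).vin = (gs i).vout) →
    (fun N : ℕ => ∫ ω, ∏ i : Fin m,
        Matrix.trace ((gs i).eval fun ℓ' k => A N ℓ' k ω) ∂μ)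
      =O[atTop] fun N : ℕ => (N : ℝ) ^ ((∑ i : Fin m, (frak (gs i).src (gs i).tgt : ℝ)) / 2)

/-! ### Products of operators perturbed by a reflection -/

section Reflection

variable {E : Type*} [NormedAddCommGroup E] [InnerProductSpace ℂ E]

/-- Sum over all suffixes `v` of `u` of `|⟪w, v f⟫|`. -/
def suffixSum (w f : E) (u : List (E →L[ℂ] E)) : ℝ :=
  (u.tails.map fun v => ‖inner ℂ w (v.prod f)‖).sum

/-- Sum over all prefixes `v` of `u` of `|⟪a, v w⟫|`. -/
def prefixSum (a w : E) (u : List (E →L[ℂ] E)) : ℝ :=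
  (u.inits.map fun v => ‖inner ℂ a (v.prod w)‖).sum

lemma suffixSum_nonneg (w f : E) (u : List (E →L[ℂ] E)) : 0 ≤ suffixSum w f u :=
  List.sum_nonneg (by simp only [List.mem_map]; rintro _ ⟨v, -, rfl⟩; exact norm_nonneg _)

lemma prefixSum_nonneg (a w : E) (u : List (E →L[ℂ] E)) : 0 ≤ prefixSum a w u :=
  List.sum_nonneg (by simp only [List.mem_map]; rintro _ ⟨v, -, rfl⟩; exact norm_nonneg _)

lemma suffixSum_cons (w f : E) (x : E →L[ℂ] E) (u : List (E →L[ℂ] E)) :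
    suffixSum w f (x :: u) = ‖inner ℂ w ((x :: u).prod f)‖ + suffixSum w f u := by
  simp [suffixSum]

lemma norm_inner_le_suffixSum (w f : E) (u : List (E →L[ℂ] E)) :
    ‖inner ℂ w (u.prod f)‖ ≤ suffixSum w f u := by
  cases u with
  | nil => simp [suffixSum]
  | cons x u =>
    rw [suffixSum_cons]
    linarith [suffixSum_nonneg w f u]

lemma prefixSum_cons [CompleteSpace E] (a w : E) (x : E →L[ℂ] E) (u : List (E →L[ℂ] E)) :
    prefixSum a w (x :: u) = ‖inner ℂ a w‖ + prefixSum (x.adjoint a) w u := by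
  simp [prefixSum, Function.comp_def, ContinuousLinearMap.adjoint_inner_left]

lemma norm_inner_le_prefixSum (a w : E) (u : List (E →L[ℂ] E)) :
    ‖inner ℂ a w‖ ≤ prefixSum a w u := by
  cases u with
  | nil => simp [prefixSum]
  | cons x u =>
    have : 0 ≤ ((u.inits.map (x :: ·)).map fun v => ‖inner ℂ a (v.prod w)‖).sum :=
      List.sum_nonneg (by
        simp only [List.mem_map]; rintro _ ⟨v, -, rfl⟩; exact norm_nonneg _)
    simpa [prefixSum] using this

/-- `T` is the reflection `1 - |w⟩⟨w|` (or the identity, when `w = 0`). -/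
structure IsReflectionAlong (T : E →L[ℂ] E) (w : E) : Prop where
  apply_eq : ∀ y, T y = y - inner ℂ w y • w
  inner_apply : ∀ y, inner ℂ w (T y) = -inner ℂ w y
  norm_apply_le : ∀ y, ‖T y‖ ≤ ‖y‖
  norm_le_two : ‖w‖ ≤ 2

/-- Each entry of the second list is the corresponding entry of the first list, or its conjugate
by `T`. -/
def ConjugatedBy (T : E →L[ℂ] E) : List (E →L[ℂ] E) → List (E →L[ℂ] E) → Prop :=
  List.Forall₂ fun x x' => x' = x ∨ x' = T * x * T

/-- The constant of `norm_prod_sub_prod_le`. -/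
def colConst (C : ℝ) : ℕ → ℝ
  | 0 => 0
  | n + 1 => C * colConst C n + 2 + 2 * C

lemma colConst_nonneg {C : ℝ} (hC : 0 ≤ C) : ∀ n, 0 ≤ colConst C n
  | 0 => le_rfl
  | n + 1 => by
    have := colConst_nonneg hC n
    unfold colConst
    positivity

/-- The constant of `norm_inner_prod_sub_prod_le`. -/
def biConst (C : ℝ) : ℕ → ℝ
  | 0 => 0
  | n + 1 => biConst C n + (1 + 2 * colConst C (n + 1)) + (1 + 2 * colConst C n)

lemma biConst_nonneg {C : ℝ} (hC : 0 ≤ C) : ∀ n, 0 ≤ biConst C n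
  | 0 => le_rfl
  | n + 1 => by
    have := biConst_nonneg hC n
    have := colConst_nonneg hC n
    have := colConst_nonneg hC (n + 1)
    unfold biConst
    positivity

lemma norm_prod_sub_prod_le {T : E →L[ℂ] E} {w : E} (hT : IsReflectionAlong T w)
    {C : ℝ} (hC : 0 ≤ C) (f : E) {u u' : List (E →L[ℂ] E)} (h : ConjugatedBy T u u')
    (hu : ∀ x ∈ u, ‖x‖ ≤ C) :
    ‖u'.prod f - u.prod f‖ ≤ colConst C u.length * suffixSum w f u := by
  unfold ConjugatedBy at h
  induction h with
  | nil => simp [colConst]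
  | @cons x x' u u' hx h ih =>
    have ih := ih fun y hy => hu y (List.mem_cons_of_mem _ hy)
    have hxC : ‖x‖ ≤ C := hu x List.mem_cons_self
    have hxle : ∀ y, ‖x y‖ ≤ C * ‖y‖ := fun y => x.le_of_opNorm_le hxC y
    have hS := suffixSum_nonneg w f u
    have hK := colConst_nonneg hC u.length
    have h1 := norm_inner_le_suffixSum w f u
    have hx'le : ∀ y, ‖x' y‖ ≤ C * ‖y‖ := by
      intro y
      rcases hx with rfl | rfl
      · exact hxle y
      · calc ‖T (x (T y))‖ ≤ ‖x (T y)‖ := hT.norm_apply_le _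
          _ ≤ C * ‖T y‖ := hxle _
          _ ≤ C * ‖y‖ := by gcongr; exact hT.norm_apply_le _
    set g := u.prod f with hg
    have key : ‖x' g - x g‖ ≤ 2 * ‖inner ℂ w (x g)‖ + 2 * C * ‖inner ℂ w g‖ := by
      rcases hx with rfl | rfl
      · simp only [sub_self, norm_zero]; positivity
      · have e : (T * x * T) g - x g = -(inner ℂ w (x g) • w) - inner ℂ w g • T (x w) := by
          change T (x (T g)) - x g = _
          rw [hT.apply_eq g, map_sub, map_smul, map_sub, map_smul, hT.apply_eq (x g)]
          abel
        rw [e]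
        calc _ ≤ ‖-(inner ℂ w (x g) • w)‖ + ‖inner ℂ w g • T (x w)‖ := norm_sub_le _ _
          _ = ‖inner ℂ w (x g)‖ * ‖w‖ + ‖inner ℂ w g‖ * ‖T (x w)‖ := by
            rw [norm_neg, norm_smul, norm_smul]
          _ ≤ ‖inner ℂ w (x g)‖ * 2 + ‖inner ℂ w g‖ * (C * 2) := by
            gcongr
            · exact hT.norm_le_two
            · exact (hT.norm_apply_le _).trans ((hxle w).trans (by gcongr; exact hT.norm_le_two))
          _ = _ := by ring
    have e2 : (x' :: u').prod f - (x :: u).prod f = x' (u'.prod f - g) + (x' g - x g) := by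
      simp [hg]
    rw [e2, suffixSum_cons, List.length_cons]
    have e3 : (x :: u).prod f = x g := by simp [hg]
    rw [e3]
    have h2 : ‖x' (u'.prod f - g)‖ ≤ C * (colConst C u.length * suffixSum w f u) :=
      (hx'le _).trans (by gcongr)
    refine (norm_add_le _ _).trans ((add_le_add h2 key).trans ?_)
    simp only [colConst]
    nlinarith [norm_nonneg (inner ℂ w (x g)), norm_nonneg (inner ℂ w g),
      mul_nonneg hC (norm_nonneg (inner ℂ w (x g))), mul_nonneg hC hK,
      mul_nonneg (mul_nonneg hC hK) (norm_nonneg (inner ℂ w (x g))),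
      mul_le_mul_of_nonneg_left h1 hC]

lemma norm_inner_prod_le {T : E →L[ℂ] E} {w : E} (hT : IsReflectionAlong T w)
    {C : ℝ} (hC : 0 ≤ C) (f : E) {u u' : List (E →L[ℂ] E)} (h : ConjugatedBy T u u')
    (hu : ∀ x ∈ u, ‖x‖ ≤ C) :
    ‖inner ℂ w (u'.prod f)‖ ≤ (1 + 2 * colConst C u.length) * suffixSum w f u := by
  have h1 := norm_prod_sub_prod_le hT hC f h hu
  have h2 := norm_inner_le_suffixSum w f u
  have h3 : inner ℂ w (u'.prod f) = inner ℂ w (u.prod f) + inner ℂ w (u'.prod f - u.prod f) := by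
    rw [inner_sub_right]; ring
  rw [h3]
  have h4 : ‖inner ℂ w (u'.prod f - u.prod f)‖ ≤ 2 * ‖u'.prod f - u.prod f‖ :=
    (norm_inner_le_norm _ _).trans (by gcongr; exact hT.norm_le_two)
  refine (norm_add_le _ _).trans ?_
  linarith

lemma norm_inner_prod_sub_prod_le [CompleteSpace E] {T : E →L[ℂ] E} {w : E}
    (hT : IsReflectionAlong T w) {C : ℝ} (hC : 0 ≤ C) (f : E) {u u' : List (E →L[ℂ] E)}
    (h : ConjugatedBy T u u') (hu : ∀ x ∈ u, ‖x‖ ≤ C) (a : E) :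
    ‖inner ℂ a (u'.prod f) - inner ℂ a (u.prod f)‖ ≤
      biConst C u.length * prefixSum a w u * suffixSum w f u := by
  unfold ConjugatedBy at h
  induction h generalizing a with
  | nil => simp [biConst]
  | @cons x x' u u' hx h ih =>
    have hu1 : ∀ y ∈ u, ‖y‖ ≤ C := fun y hy => hu y (List.mem_cons_of_mem _ hy)
    have ih := ih hu1 (x.adjoint a)
    have hB := biConst_nonneg hC u.length
    have hc1 := colConst_nonneg hC u.length
    have hc2 := colConst_nonneg hC (u.length + 1)
    have hP := prefixSum_nonneg (x.adjoint a) w u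
    have hS : suffixSum w f u ≤ suffixSum w f (x :: u) := by
      rw [suffixSum_cons]; linarith [norm_nonneg (inner ℂ w ((x :: u).prod f))]
    have hS0 := suffixSum_nonneg w f u
    have hPa : ‖inner ℂ (x.adjoint a) w‖ ≤ prefixSum (x.adjoint a) w u :=
      norm_inner_le_prefixSum _ _ _
    set g' := u'.prod f with hg'
    have e1 : inner ℂ a ((x :: u).prod f) = inner ℂ (x.adjoint a) (u.prod f) := by
      simp [ContinuousLinearMap.adjoint_inner_left]
    have e2 : inner ℂ a ((x' :: u').prod f) = inner ℂ a (x' g') := by simp [hg']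
    have h2 : ‖inner ℂ w (x' g')‖ ≤
        (1 + 2 * colConst C (u.length + 1)) * suffixSum w f (x :: u) := by
      have := norm_inner_prod_le hT hC f (u := x :: u) (u' := x' :: u')
        (List.Forall₂.cons hx h) hu
      simpa [hg'] using this
    have h3 : ‖inner ℂ w g'‖ ≤ (1 + 2 * colConst C u.length) * suffixSum w f u :=
      norm_inner_prod_le hT hC f h hu1
    have key : ‖inner ℂ a (x' g') - inner ℂ (x.adjoint a) g'‖ ≤
        ‖inner ℂ a w‖ * ‖inner ℂ w (x' g')‖ + ‖inner ℂ (x.adjoint a) w‖ * ‖inner ℂ w g'‖ := by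
      rcases hx with rfl | rfl
      · rw [ContinuousLinearMap.adjoint_inner_left, sub_self, norm_zero]; positivity
      · have e : inner ℂ a ((T * x * T) g') - inner ℂ (x.adjoint a) g' =
            inner ℂ w ((T * x * T) g') * inner ℂ a w
              - inner ℂ w g' * inner ℂ (x.adjoint a) w := by
          change inner ℂ a (T (x (T g'))) - _ = inner ℂ w (T (x (T g'))) * _ - _
          rw [hT.inner_apply, hT.apply_eq (x (T g')), inner_sub_right, inner_smul_right,
            ← ContinuousLinearMap.adjoint_inner_left x (T g') a, hT.apply_eq g', inner_sub_right,
            inner_smul_right]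
          ring
        rw [e]
        refine (norm_sub_le _ _).trans ?_
        rw [norm_mul, norm_mul]
        apply le_of_eq; ring
    rw [e1, e2, prefixSum_cons, List.length_cons]
    have e3 : inner ℂ a (x' g') - inner ℂ (x.adjoint a) (u.prod f) =
        (inner ℂ a (x' g') - inner ℂ (x.adjoint a) g') +
          (inner ℂ (x.adjoint a) g' - inner ℂ (x.adjoint a) (u.prod f)) := by ring
    rw [e3]
    refine (norm_add_le _ _).trans ((add_le_add key ih).trans ?_)
    set S' := suffixSum w f (x :: u)
    set S := suffixSum w f u
    set p := prefixSum (x.adjoint a) w u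
    set α := ‖inner ℂ a w‖ with hα
    have hα0 : 0 ≤ α := norm_nonneg _
    have hS'0 : 0 ≤ S' := hS0.trans hS
    simp only [biConst]
    have t1 : α * ‖inner ℂ w (x' g')‖ ≤
        (α + p) * ((1 + 2 * colConst C (u.length + 1)) * S') := by
      gcongr
      linarith
    have t2 : ‖inner ℂ (x.adjoint a) w‖ * ‖inner ℂ w g'‖ ≤
        (α + p) * ((1 + 2 * colConst C u.length) * S') := by
      refine mul_le_mul (by linarith) (h3.trans ?_) (norm_nonneg _) (by linarith)
      gcongr
    have t3 : biConst C u.length * p * S ≤ biConst C u.length * (α + p) * S' := by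
      gcongr
      linarith
    refine (add_le_add (add_le_add t1 t2) t3).trans (le_of_eq ?_)
    ring

end Reflection

section MatrixSwap

open scoped Matrix.Norms.L2Operator

variable {N : ℕ}

lemma inner_single_toEuclideanCLM_single (A : Matrix (Fin N) (Fin N) ℂ) (i j : Fin N) :
    inner ℂ (EuclideanSpace.single i (1 : ℂ))
      (Matrix.toEuclideanCLM (𝕜 := ℂ) A (EuclideanSpace.single j (1 : ℂ))) = A i j := by
  rw [EuclideanSpace.inner_single_left, Matrix.ofLp_toEuclideanCLM]
  simp

/-- The operator of the transposition exchanging the basis vectors `j` and `c`. -/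
def swapCLM (j c : Fin N) : EuclideanSpace ℂ (Fin N) →L[ℂ] EuclideanSpace ℂ (Fin N) :=
  Matrix.toEuclideanCLM (𝕜 := ℂ) ((1 : Matrix (Fin N) (Fin N) ℂ).submatrix (Equiv.swap j c) id)

lemma swapCLM_apply (j c : Fin N) (y : EuclideanSpace ℂ (Fin N)) (k : Fin N) :
    swapCLM j c y k = y (Equiv.swap j c k) := by
  rw [swapCLM, Matrix.ofLp_toEuclideanCLM]
  simp [Matrix.mulVec, dotProduct, Matrix.one_apply]

lemma inner_single_sub_single (j c : Fin N) (y : EuclideanSpace ℂ (Fin N)) :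
    inner ℂ (EuclideanSpace.single j (1 : ℂ) - EuclideanSpace.single c (1 : ℂ)) y = y j - y c := by
  rw [inner_sub_left, EuclideanSpace.inner_single_left, EuclideanSpace.inner_single_left]
  simp

lemma isReflectionAlong_swapCLM (j c : Fin N) :
    IsReflectionAlong (swapCLM j c)
      (EuclideanSpace.single j (1 : ℂ) - EuclideanSpace.single c (1 : ℂ)) where
  apply_eq y := by
    ext k
    rw [inner_single_sub_single, swapCLM_apply]
    simp only [PiLp.sub_apply, PiLp.smul_apply, PiLp.single_apply, smul_eq_mul,
      Equiv.swap_apply_def]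
    by_cases h1 : k = j <;> by_cases h2 : k = c <;> simp [h1, h2] <;> grind
  inner_apply y := by
    rw [inner_single_sub_single, inner_single_sub_single, swapCLM_apply, swapCLM_apply]
    simp
  norm_apply_le y := by
    rw [EuclideanSpace.norm_eq, EuclideanSpace.norm_eq]
    simp only [swapCLM_apply]
    rw [Equiv.sum_comp (Equiv.swap j c) (fun k => ‖y k‖ ^ 2)]
  norm_le_two := by
    refine (norm_sub_le _ _).trans ?_
    simp; norm_num

lemma toEuclideanCLM_submatrix_swap (A : Matrix (Fin N) (Fin N) ℂ) (j c : Fin N) :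
    Matrix.toEuclideanCLM (𝕜 := ℂ) (A.submatrix (Equiv.swap j c) (Equiv.swap j c)) =
      swapCLM j c * Matrix.toEuclideanCLM (𝕜 := ℂ) A * swapCLM j c := by
  rw [swapCLM, ← map_mul, ← map_mul]
  congr 1
  ext k l
  simp only [Matrix.mul_apply, Matrix.submatrix_apply, Matrix.one_apply, id]
  simp only [ite_mul, one_mul, zero_mul, Finset.sum_ite_eq, Finset.mem_univ, if_true, mul_ite,
    mul_one, mul_zero]
  have : ∀ x, Equiv.swap j c x = l ↔ Equiv.swap j c l = x := fun x =>
    ⟨fun h => by rw [← h]; simp, fun h => by rw [← h]; simp⟩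
  simp only [this, Finset.sum_ite_eq, Finset.mem_univ, if_true]

/-- Each matrix of the second list is the corresponding matrix of the first list, or its conjugate
by the transposition of `j` and `c`. -/
def SwapRelated (j c : Fin N) :
    List (Matrix (Fin N) (Fin N) ℂ) → List (Matrix (Fin N) (Fin N) ℂ) → Prop :=
  List.Forall₂ fun x x' => x' = x ∨ x' = x.submatrix (Equiv.swap j c) (Equiv.swap j c)

/-- Sum over the suffixes `v` of `u` of the moduli of the entries `(j, i)` and `(c, i)` of `v`. -/
def entrySuffixSum (u : List (Matrix (Fin N) (Fin N) ℂ)) (j c i : Fin N) : ℝ :=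
  (u.tails.map fun v => ‖v.prod j i‖ + ‖v.prod c i‖).sum

/-- Sum over the prefixes `v` of `u` of the moduli of the entries `(c, j)` and `(c, c)` of
`M * v`. -/
def entryPrefixSum (M : Matrix (Fin N) (Fin N) ℂ) (u : List (Matrix (Fin N) (Fin N) ℂ))
    (j c : Fin N) : ℝ :=
  (u.inits.map fun v => ‖(M * v.prod) c j‖ + ‖(M * v.prod) c c‖).sum

lemma entrySuffixSum_nonneg (u : List (Matrix (Fin N) (Fin N) ℂ)) (j c i : Fin N) :
    0 ≤ entrySuffixSum u j c i :=
  List.sum_nonneg (by simp only [List.mem_map]; rintro _ ⟨v, -, rfl⟩; positivity)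

lemma entryPrefixSum_nonneg (M : Matrix (Fin N) (Fin N) ℂ)
    (u : List (Matrix (Fin N) (Fin N) ℂ)) (j c : Fin N) : 0 ≤ entryPrefixSum M u j c :=
  List.sum_nonneg (by simp only [List.mem_map]; rintro _ ⟨v, -, rfl⟩; positivity)

lemma conjugatedBy_map {j c : Fin N} {u u' : List (Matrix (Fin N) (Fin N) ℂ)}
    (h : SwapRelated j c u u') :
    ConjugatedBy (swapCLM j c) (u.map (Matrix.toEuclideanCLM (𝕜 := ℂ)))
      (u'.map (Matrix.toEuclideanCLM (𝕜 := ℂ))) := by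
  unfold ConjugatedBy
  rw [List.forall₂_map_left_iff, List.forall₂_map_right_iff]
  refine h.imp fun x x' hx => ?_
  rcases hx with rfl | rfl
  · exact Or.inl rfl
  · exact Or.inr (toEuclideanCLM_submatrix_swap x j c)

lemma suffixSum_map_le (u : List (Matrix (Fin N) (Fin N) ℂ)) (j c i : Fin N) :
    suffixSum (EuclideanSpace.single j (1 : ℂ) - EuclideanSpace.single c (1 : ℂ))
      (EuclideanSpace.single i (1 : ℂ)) (u.map (Matrix.toEuclideanCLM (𝕜 := ℂ))) ≤
      entrySuffixSum u j c i := by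
  unfold suffixSum entrySuffixSum
  rw [List.map_tails, List.map_map]
  refine List.sum_le_sum fun v _ => ?_
  simp only [Function.comp_apply]
  rw [← map_list_prod, inner_sub_left, inner_single_toEuclideanCLM_single,
    inner_single_toEuclideanCLM_single]
  exact norm_sub_le _ _

lemma norm_prod_apply_sub_le {j c : Fin N} {u u' : List (Matrix (Fin N) (Fin N) ℂ)}
    (h : SwapRelated j c u u') {C : ℝ} (hC : 0 ≤ C) (hu : ∀ x ∈ u, ‖x‖ ≤ C) (i : Fin N) :
    ‖u'.prod i i - u.prod i i‖ ≤ colConst C u.length * entrySuffixSum u j c i := by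
  have h1 := norm_prod_sub_prod_le (isReflectionAlong_swapCLM j c) hC
    (EuclideanSpace.single i (1 : ℂ)) (conjugatedBy_map h) (by
      simp only [List.mem_map]
      rintro _ ⟨x, hx, rfl⟩
      exact hu x hx)
  rw [List.length_map] at h1
  rw [← inner_single_toEuclideanCLM_single u'.prod, ← inner_single_toEuclideanCLM_single u.prod,
    ← inner_sub_right]
  refine (norm_inner_le_norm _ _).trans ?_
  rw [map_list_prod, map_list_prod]
  have h2 : ‖EuclideanSpace.single i (1 : ℂ)‖ = 1 := by simp
  rw [h2, one_mul]
  exact h1.trans (mul_le_mul_of_nonneg_left (suffixSum_map_le u j c i) (colConst_nonneg hC _))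

lemma norm_swapped_prod_apply_sub_le {j c : Fin N} {u u' : List (Matrix (Fin N) (Fin N) ℂ)}
    (h : SwapRelated j c u u') {C : ℝ} (hC : 0 ≤ C) (hu : ∀ x ∈ u, ‖x‖ ≤ C)
    (M : Matrix (Fin N) (Fin N) ℂ) (i : Fin N) :
    ‖(M.submatrix (Equiv.swap j c) (Equiv.swap j c) * u'.prod) j i - (M * u.prod) c i‖ ≤
      (biConst C u.length + (1 + 2 * colConst C u.length)) *
        entryPrefixSum M u j c * entrySuffixSum u j c i := by
  have hT := isReflectionAlong_swapCLM j c
  have hu' : ∀ x ∈ u.map (Matrix.toEuclideanCLM (𝕜 := ℂ)), ‖x‖ ≤ C := by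
    simp only [List.mem_map]
    rintro _ ⟨x, hx, rfl⟩
    exact hu x hx
  set w := EuclideanSpace.single j (1 : ℂ) - EuclideanSpace.single c (1 : ℂ) with hw
  set ec := EuclideanSpace.single c (1 : ℂ) with hec
  set ei := EuclideanSpace.single i (1 : ℂ) with hei
  set m := Matrix.toEuclideanCLM (𝕜 := ℂ) M with hm
  set a := m.adjoint ec with ha
  set g' := (u'.map (Matrix.toEuclideanCLM (𝕜 := ℂ))).prod ei with hg'
  set g := (u.map (Matrix.toEuclideanCLM (𝕜 := ℂ))).prod ei with hg
  have h1 := norm_inner_prod_sub_prod_le hT hC ei (conjugatedBy_map h) hu' a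
  have h2 := norm_inner_prod_le hT hC ei (conjugatedBy_map h) hu'
  have h3 := norm_inner_le_prefixSum a w (u.map (Matrix.toEuclideanCLM (𝕜 := ℂ)))
  have hS := suffixSum_map_le u j c i
  have hP : prefixSum a w (u.map (Matrix.toEuclideanCLM (𝕜 := ℂ))) ≤ entryPrefixSum M u j c := by
    unfold prefixSum entryPrefixSum
    rw [List.map_inits, List.map_map]
    refine List.sum_le_sum fun v _ => ?_
    simp only [Function.comp_apply]
    rw [← map_list_prod, ha, ContinuousLinearMap.adjoint_inner_left, hm,
      ← mul_apply_eq_comp, ← map_mul, hw, map_sub, inner_sub_right,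
      inner_single_toEuclideanCLM_single, inner_single_toEuclideanCLM_single]
    exact norm_sub_le _ _
  rw [List.length_map] at h1 h2
  have hs0 := suffixSum_nonneg w ei (u.map (Matrix.toEuclideanCLM (𝕜 := ℂ)))
  have hp0 := prefixSum_nonneg a w (u.map (Matrix.toEuclideanCLM (𝕜 := ℂ)))
  have hB := biConst_nonneg hC u.length
  have hc := colConst_nonneg hC u.length
  have e1 : (M * u.prod) c i = inner ℂ a g := by
    rw [← inner_single_toEuclideanCLM_single (M * u.prod), map_mul, map_list_prod, ha,
      ContinuousLinearMap.adjoint_inner_left]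
    rfl
  have e2 : (M.submatrix (Equiv.swap j c) (Equiv.swap j c) * u'.prod) j i =
      inner ℂ a g' - inner ℂ w g' * inner ℂ a w := by
    rw [← inner_single_toEuclideanCLM_single (_ * u'.prod), map_mul, map_list_prod,
      toEuclideanCLM_submatrix_swap, EuclideanSpace.inner_single_left]
    change _ * (swapCLM j c (m (swapCLM j c g'))) j = _
    rw [swapCLM_apply, Equiv.swap_apply_left]
    have : ∀ y : EuclideanSpace ℂ (Fin N), inner ℂ a y = (m y) c := by
      intro y
      rw [ha, ContinuousLinearMap.adjoint_inner_left, hec, EuclideanSpace.inner_single_left]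
      simp
    rw [hT.apply_eq g', this, this, map_sub, map_smul]
    simp
  rw [e1, e2]
  have e3 : inner ℂ a g' - inner ℂ w g' * inner ℂ a w - inner ℂ a g =
      (inner ℂ a g' - inner ℂ a g) - inner ℂ w g' * inner ℂ a w := by ring
  rw [e3]
  refine (norm_sub_le _ _).trans ?_
  rw [norm_mul]
  set s := suffixSum w ei (u.map (Matrix.toEuclideanCLM (𝕜 := ℂ)))
  set p := prefixSum a w (u.map (Matrix.toEuclideanCLM (𝕜 := ℂ)))
  calc _ ≤ biConst C u.length * p * s + (1 + 2 * colConst C u.length) * s * p := by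
        gcongr
    _ = (biConst C u.length + (1 + 2 * colConst C u.length)) * p * s := by ring
    _ ≤ _ := by
        have := entryPrefixSum_nonneg M u j c
        gcongr

end MatrixSwap

section Estimates

open scoped Matrix.Norms.L2Operator

variable {N : ℕ}

lemma l2_opNorm_one_le : ‖(1 : Matrix (Fin N) (Fin N) ℂ)‖ ≤ 1 := by
  rw [Matrix.cstar_norm_def, map_one]
  exact ContinuousLinearMap.norm_id_le

lemma sum_norm_sq_col_le (A : Matrix (Fin N) (Fin N) ℂ) (j : Fin N) :
    ∑ i, ‖A i j‖ ^ 2 ≤ ‖A‖ ^ 2 := by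
  have h := Matrix.l2_opNorm_mulVec A (EuclideanSpace.single j (1 : ℂ))
  have h2 : ‖EuclideanSpace.single j (1 : ℂ)‖ = 1 := by simp
  rw [h2, mul_one, EuclideanSpace.norm_eq, Real.sqrt_le_left (norm_nonneg _)] at h
  simpa using h

lemma sum_norm_sq_row_le (A : Matrix (Fin N) (Fin N) ℂ) (i : Fin N) :
    ∑ j, ‖A i j‖ ^ 2 ≤ ‖A‖ ^ 2 := by
  have h := sum_norm_sq_col_le Aᴴ i
  rw [Matrix.l2_opNorm_conjTranspose] at h
  simpa using h

lemma norm_apply_le_l2_opNorm (A : Matrix (Fin N) (Fin N) ℂ) (i j : Fin N) : ‖A i j‖ ≤ ‖A‖ := by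
  have h := (Finset.single_le_sum (f := fun i => ‖A i j‖ ^ 2) (fun i _ => by positivity)
    (Finset.mem_univ i)).trans (sum_norm_sq_col_le A j)
  exact le_of_sq_le_sq h (norm_nonneg _)

lemma sum_norm_sq_mul_left_le (A X : Matrix (Fin N) (Fin N) ℂ) :
    ∑ i, ∑ j, ‖(A * X) i j‖ ^ 2 ≤ ‖A‖ ^ 2 * ∑ i, ∑ j, ‖X i j‖ ^ 2 := by
  rw [Finset.sum_comm, Finset.sum_comm (f := fun i j => ‖X i j‖ ^ 2), Finset.mul_sum]
  refine Finset.sum_le_sum fun j _ => ?_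
  have h := Matrix.l2_opNorm_mulVec A (WithLp.toLp 2 (fun i => X i j))
  have h2 := pow_le_pow_left₀ (norm_nonneg _) h 2
  rw [mul_pow, EuclideanSpace.norm_sq_eq, EuclideanSpace.norm_sq_eq] at h2
  simpa [Matrix.mulVec, dotProduct, Matrix.mul_apply] using h2

lemma sum_norm_sq_mul_right_le (X A : Matrix (Fin N) (Fin N) ℂ) :
    ∑ i, ∑ j, ‖(X * A) i j‖ ^ 2 ≤ (∑ i, ∑ j, ‖X i j‖ ^ 2) * ‖A‖ ^ 2 := by
  have h := sum_norm_sq_mul_left_le Aᴴ Xᴴ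
  rw [← Matrix.conjTranspose_mul, Matrix.l2_opNorm_conjTranspose] at h
  simp only [Matrix.conjTranspose_apply, norm_star] at h
  rw [Finset.sum_comm, Finset.sum_comm (f := fun i j => ‖X i j‖ ^ 2), mul_comm]
  exact h

lemma sum_mul_le_of_sq_le {a b : Fin N → ℝ} {A B : ℝ} (hA : 0 ≤ A) (hB : 0 ≤ B)
    (ha : ∑ i, a i ^ 2 ≤ A ^ 2) (hb : ∑ i, b i ^ 2 ≤ B ^ 2) : ∑ i, a i * b i ≤ A * B :=
  (Real.sum_mul_le_sqrt_mul_sqrt _ _ _).trans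
    (mul_le_mul (Real.sqrt_le_iff.2 ⟨hA, ha⟩) (Real.sqrt_le_iff.2 ⟨hB, hb⟩)
      (Real.sqrt_nonneg _) hA)

lemma sum_le_of_sq_le {a : Fin N → ℝ} {A : ℝ} (hA : 0 ≤ A) (ha : ∑ i, a i ^ 2 ≤ A ^ 2) :
    ∑ i, a i ≤ A * √N := by
  have := sum_mul_le_of_sq_le (b := fun _ => 1) hA (Real.sqrt_nonneg N) ha (by simp)
  simpa using this

lemma sum_norm_diag_le (X : Matrix (Fin N) (Fin N) ℂ) {R : ℝ} (hR : 0 ≤ R)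
    (h : ∑ i, ∑ j, ‖X i j‖ ^ 2 ≤ R ^ 2) : ∑ i, ‖X i i‖ ≤ R * √N :=
  sum_le_of_sq_le hR ((Finset.sum_le_sum fun i _ =>
    Finset.single_le_sum (f := fun j => ‖X i j‖ ^ 2) (fun j _ => by positivity)
      (Finset.mem_univ i)).trans h)

lemma sum_sum_mul_list_sum_le {α : Type*} (l : List α) (f : α → Fin N → Fin N → ℝ)
    (k : Fin N → Fin N → ℝ) (B : ℝ) (h : ∀ v ∈ l, ∑ j, ∑ c, k j c * f v j c ≤ B) :
    ∑ j, ∑ c, k j c * (l.map fun v => f v j c).sum ≤ l.length * B := by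
  induction l with
  | nil => simp
  | cons v l ih =>
    have h1 := h v List.mem_cons_self
    have h2 := ih fun y hy => h y (List.mem_cons_of_mem _ hy)
    simp only [List.map_cons, List.sum_cons, mul_add, Finset.sum_add_distrib, List.length_cons]
    push_cast
    linarith

lemma sum_sum_suffix_le {a y h : Fin N → ℝ} {B : ℝ} (hB : 0 ≤ B)
    (hy0 : ∀ j, 0 ≤ y j) (hh0 : ∀ j, 0 ≤ h j)
    (ha : ∑ j, a j ^ 2 ≤ B ^ 2) (hy : ∑ j, y j ^ 2 ≤ B ^ 2) (hh : ∑ j, h j ^ 2 ≤ B ^ 2) :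
    ∑ j, ∑ c, a j * h c * (y j + y c) ≤ 2 * B ^ 3 * √N := by
  have e : ∑ j, ∑ c, a j * h c * (y j + y c) =
      (∑ j, a j * y j) * (∑ c, h c) + (∑ j, a j) * ∑ c, h c * y c := by
    simp only [Finset.sum_mul_sum, ← Finset.sum_add_distrib]
    exact Finset.sum_congr rfl fun j _ => Finset.sum_congr rfl fun c _ => by ring
  rw [e]
  have h1 := sum_mul_le_of_sq_le hB hB ha hy
  have h2 := sum_mul_le_of_sq_le hB hB hh hy
  have h3 := sum_le_of_sq_le hB ha
  have h4 := sum_le_of_sq_le hB hh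
  have h5 : 0 ≤ ∑ c, h c := Finset.sum_nonneg fun c _ => hh0 c
  have h6 : 0 ≤ ∑ c, h c * y c := Finset.sum_nonneg fun c _ => mul_nonneg (hh0 c) (hy0 c)
  calc _ ≤ (B * B) * (B * √N) + (B * √N) * (B * B) := by gcongr
    _ = _ := by ring

lemma sum_sum_prefix_suffix_le {a r : Fin N → ℝ} {X : Fin N → Fin N → ℝ} {B : ℝ} (hB : 0 ≤ B)
    (ha0 : ∀ j, 0 ≤ a j) (hr0 : ∀ j, 0 ≤ r j) (hX0 : ∀ c j, 0 ≤ X c j)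
    (ha : ∑ j, a j ^ 2 ≤ B ^ 2) (hr : ∑ j, r j ^ 2 ≤ B ^ 2)
    (hX : ∀ j, ∑ c, X c j ^ 2 ≤ B ^ 2) :
    ∑ j, ∑ c, a j * (r j + r c) * (X c j + X c c) ≤
      2 * B ^ 3 * √N + 2 * B ^ 2 * √N * √(∑ c, X c c ^ 2) := by
  have e : ∑ j, ∑ c, a j * (r j + r c) * (X c j + X c c) =
      (∑ j, a j * r j * ∑ c, X c j) + (∑ j, a j * ∑ c, X c j * r c) +
        (∑ j, a j * r j) * (∑ c, X c c) + (∑ j, a j) * ∑ c, X c c * r c := by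
    rw [Finset.sum_mul_sum, Finset.sum_mul_sum]
    simp only [Finset.mul_sum, ← Finset.sum_add_distrib]
    exact Finset.sum_congr rfl fun j _ => Finset.sum_congr rfl fun c _ => by ring
  have hd : ∑ c, X c c ^ 2 ≤ √(∑ c, X c c ^ 2) ^ 2 := by
    rw [Real.sq_sqrt (Finset.sum_nonneg fun c _ => sq_nonneg _)]
  have har := sum_mul_le_of_sq_le hB hB ha hr
  have har0 : ∀ j, 0 ≤ a j * r j := fun j => mul_nonneg (ha0 j) (hr0 j)
  have ha1 := sum_le_of_sq_le hB ha
  have h1 : ∑ j, a j * r j * ∑ c, X c j ≤ (B * B) * (B * √N) := by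
    calc _ ≤ ∑ j, a j * r j * (B * √N) := Finset.sum_le_sum fun j _ =>
          mul_le_mul_of_nonneg_left (sum_le_of_sq_le hB (hX j)) (har0 j)
      _ = (∑ j, a j * r j) * (B * √N) := by rw [Finset.sum_mul]
      _ ≤ _ := by gcongr
  have h2 : ∑ j, a j * ∑ c, X c j * r c ≤ (B * √N) * (B * B) := by
    calc _ ≤ ∑ j, a j * (B * B) := Finset.sum_le_sum fun j _ =>
          mul_le_mul_of_nonneg_left (sum_mul_le_of_sq_le hB hB (hX j) hr) (ha0 j)
      _ = (∑ j, a j) * (B * B) := by rw [Finset.sum_mul]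
      _ ≤ _ := by gcongr
  have h3 : (∑ j, a j * r j) * (∑ c, X c c) ≤ (B * B) * (√(∑ c, X c c ^ 2) * √N) :=
    mul_le_mul har (sum_le_of_sq_le (Real.sqrt_nonneg _) hd)
      (Finset.sum_nonneg fun c _ => hX0 c c) (by positivity)
  have h4 : (∑ j, a j) * ∑ c, X c c * r c ≤ (B * √N) * (√(∑ c, X c c ^ 2) * B) :=
    mul_le_mul ha1 (sum_mul_le_of_sq_le (Real.sqrt_nonneg _) hB hd hr)
      (Finset.sum_nonneg fun c _ => mul_nonneg (hX0 c c) (hr0 c)) (by positivity)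
  rw [e]
  refine (add_le_add (add_le_add (add_le_add h1 h2) h3) h4).trans (le_of_eq ?_)
  ring

/-- A stochastic kernel concentrated on the fibres of `β`, spread out on large fibres. -/
lemma exists_block_kernel {q : ℕ} (β : Fin N → Fin q) {η : ℝ} (hη : 0 < η) :
    ∃ W : Fin N → Fin N → ℝ, (∀ j c, 0 ≤ W j c) ∧ (∀ j, ∑ c, W j c = 1) ∧
      (∀ j c, W j c ≠ 0 → β j = β c) ∧ (∀ j c, j ≠ c → W j c ≤ η⁻¹ / N) ∧
      ∑ j, ∑ c, W j c ^ 2 ≤ q + q * (η * N) := by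
  set m : Fin N → ℕ := fun j => (Finset.univ.filter fun c => β j = β c).card with hm
  have hmpos : ∀ j, 0 < m j := fun j => Finset.card_pos.2 ⟨j, by simp⟩
  set W : Fin N → Fin N → ℝ := fun j c =>
    if η * N ≤ m j then (if β j = β c then (m j : ℝ)⁻¹ else 0) else (if j = c then 1 else 0)
    with hW
  have hW0 : ∀ j c, 0 ≤ W j c := by
    intro j c
    simp only [hW]
    split_ifs <;> positivity
  have hsum : ∀ j, ∑ c, W j c = 1 := by
    intro j
    simp only [hW]
    by_cases h : η * N ≤ m j
    · simp only [h, if_true]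
      rw [← Finset.sum_filter, Finset.sum_const, nsmul_eq_mul]
      exact mul_inv_cancel₀ (by exact_mod_cast (hmpos j).ne')
    · simp [h]
  refine ⟨W, hW0, hsum, ?_, ?_, ?_⟩
  · intro j c h
    simp only [hW] at h
    by_contra hne
    have : j ≠ c := fun h => hne (by rw [h])
    simp [hne, this] at h
  · intro j c hjc
    have hN : 0 < (N : ℝ) := by exact_mod_cast (Fin.pos j)
    simp only [hW, hjc, if_false]
    split_ifs with h1 h2
    · rw [div_eq_mul_inv, ← mul_inv]
      exact inv_anti₀ (by positivity) h1
    all_goals positivity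
  · have hle : ∀ j c, W j c ^ 2 ≤ (if η * N ≤ m j then (m j : ℝ)⁻¹ else 1) * W j c := by
      intro j c
      have h1 : ((m j : ℝ))⁻¹ ≥ 0 := by positivity
      simp only [hW]
      split_ifs <;> simp [sq]
    calc ∑ j, ∑ c, W j c ^ 2
        ≤ ∑ j, ∑ c, (if η * N ≤ m j then (m j : ℝ)⁻¹ else 1) * W j c :=
          Finset.sum_le_sum fun j _ => Finset.sum_le_sum fun c _ => hle j c
      _ = ∑ j, (if η * N ≤ m j then (m j : ℝ)⁻¹ else 1) := by
          refine Finset.sum_congr rfl fun j _ => ?_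
          rw [← Finset.mul_sum, hsum, mul_one]
      _ = ∑ r : Fin q, ∑ j ∈ Finset.univ.filter (fun j => β j = r),
            (if η * N ≤ m j then (m j : ℝ)⁻¹ else 1) := by
          rw [Finset.sum_fiberwise]
      _ ≤ ∑ _r : Fin q, (1 + η * N) := by
          refine Finset.sum_le_sum fun r _ => ?_
          set F := Finset.univ.filter (fun j => β j = r) with hF
          have hmF : ∀ j ∈ F, m j = F.card := by
            intro j hj
            have : β j = r := by simpa [hF] using hj
            simp only [hm, hF, this]
            congr 1
            ext c
            simp [eq_comm]
          rw [Finset.sum_congr rfl (g := fun _ => if η * N ≤ F.card then (F.card : ℝ)⁻¹ else 1)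
            (fun j hj => by rw [hmF j hj]), Finset.sum_const, nsmul_eq_mul]
          have hN : 0 ≤ η * (N : ℝ) := by positivity
          split_ifs with h
          · have : (F.card : ℝ) * (F.card : ℝ)⁻¹ ≤ 1 := mul_inv_le_one
            linarith
          · push Not at h
            linarith
      _ = _ := by simp

end Estimates

section Words

open scoped Matrix.Norms.L2Operator

variable {N : ℕ} {ι S Q : Type}

/-- The product of a word of coloured matrix-valued functions. -/
def wordProd (u : List (ι × (S → Matrix (Fin N) (Fin N) ℂ))) (s : S) : Matrix (Fin N) (Fin N) ℂ :=
  (u.map fun x => x.2 s).prod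

/-- The sum of the squared moduli of the diagonal entries of the values of a word. -/
def diagSq [Fintype S] (u : List (ι × (S → Matrix (Fin N) (Fin N) ℂ))) : ℝ :=
  ∑ s, ∑ i, ‖wordProd u s i i‖ ^ 2

/-- A coloured matrix-valued function, bounded by `C` and with zero diagonal, on which the
permutation `θ ℓ j c` of the states acts as conjugation by the transposition of `j` and `c` if the
colour is `ℓ`, and trivially otherwise, for all `j` and `c` in the same fibre of `β`. -/
structure IsSwapLetter (C : ℝ) (β : Fin N → Q) (θ : ι → Fin N → Fin N → Equiv.Perm S)
    (x : ι × (S → Matrix (Fin N) (Fin N) ℂ)) : Prop where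
  norm_le : ∀ s, ‖x.2 s‖ ≤ C
  diag_eq_zero : ∀ s i, x.2 s i i = 0
  map_of_eq : ∀ ℓ j c s, β j = β c → x.1 = ℓ →
    x.2 (θ ℓ j c s) = (x.2 s).submatrix (Equiv.swap j c) (Equiv.swap j c)
  map_of_ne : ∀ ℓ j c s, β j = β c → x.1 ≠ ℓ → x.2 (θ ℓ j c s) = x.2 s

variable {C : ℝ} {β : Fin N → Q} {θ : ι → Fin N → Fin N → Equiv.Perm S}

lemma wordProd_cons (x : ι × (S → Matrix (Fin N) (Fin N) ℂ))
    (u : List (ι × (S → Matrix (Fin N) (Fin N) ℂ))) (s : S) :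
    wordProd (x :: u) s = x.2 s * wordProd u s := by
  simp [wordProd]

lemma norm_wordProd_le (hC : 1 ≤ C) {u : List (ι × (S → Matrix (Fin N) (Fin N) ℂ))}
    (hu : ∀ x ∈ u, IsSwapLetter C β θ x) (s : S) : ‖wordProd u s‖ ≤ C ^ u.length := by
  induction u with
  | nil => simpa [wordProd] using l2_opNorm_one_le
  | cons x u ih =>
    rw [wordProd_cons, List.length_cons, pow_succ']
    exact (norm_mul_le _ _).trans (mul_le_mul ((hu x List.mem_cons_self).norm_le s)
      (ih fun y hy => hu y (List.mem_cons_of_mem _ hy)) (norm_nonneg _) (by linarith))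

lemma norm_wordProd_le_of_length_le (hC : 1 ≤ C)
    {u : List (ι × (S → Matrix (Fin N) (Fin N) ℂ))}
    (hu : ∀ x ∈ u, IsSwapLetter C β θ x) {n : ℕ} (hn : u.length ≤ n) (s : S) :
    ‖wordProd u s‖ ≤ C ^ n :=
  (norm_wordProd_le hC hu s).trans (pow_le_pow_right₀ hC hn)

lemma swapRelated_map {u : List (ι × (S → Matrix (Fin N) (Fin N) ℂ))}
    (hu : ∀ x ∈ u, IsSwapLetter C β θ x) (ℓ : ι) {j c : Fin N} (hjc : β j = β c) (s : S) :
    SwapRelated j c (u.map fun x => x.2 s) (u.map fun x => x.2 (θ ℓ j c s)) := by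
  unfold SwapRelated
  rw [List.forall₂_map_left_iff, List.forall₂_map_right_iff, List.forall₂_same]
  intro x hx
  by_cases h : x.1 = ℓ
  · exact Or.inr ((hu x hx).map_of_eq ℓ j c s hjc h)
  · exact Or.inl ((hu x hx).map_of_ne ℓ j c s hjc h)

lemma wordProd_swap_self {u : List (ι × (S → Matrix (Fin N) (Fin N) ℂ))}
    (hu : ∀ x ∈ u, IsSwapLetter C β θ x) (ℓ : ι) (j : Fin N) (s : S) :
    wordProd u (θ ℓ j j s) = wordProd u s := by
  unfold wordProd
  congr 1
  refine List.map_congr_left fun x hx => ?_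
  by_cases h : x.1 = ℓ
  · rw [(hu x hx).map_of_eq ℓ j j s rfl h]; ext; simp
  · rw [(hu x hx).map_of_ne ℓ j j s rfl h]

lemma entrySuffixSum_wordProd (u : List (ι × (S → Matrix (Fin N) (Fin N) ℂ))) (s : S)
    (j c i : Fin N) :
    entrySuffixSum (u.map fun x => x.2 s) j c i =
      (u.tails.map fun v => ‖wordProd v s j i‖ + ‖wordProd v s c i‖).sum := by
  unfold entrySuffixSum
  rw [List.map_tails, List.map_map]
  rfl

lemma entryPrefixSum_wordProd (x : ι × (S → Matrix (Fin N) (Fin N) ℂ))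
    (u : List (ι × (S → Matrix (Fin N) (Fin N) ℂ))) (s : S) (j c : Fin N) :
    entryPrefixSum (x.2 s) (u.map fun x => x.2 s) j c =
      (u.inits.map fun v => ‖wordProd (x :: v) s c j‖ + ‖wordProd (x :: v) s c c‖).sum := by
  unfold entryPrefixSum
  rw [List.map_inits, List.map_map]
  simp only [wordProd_cons]
  rfl

lemma sum_sum_mul_entrySuffixSum_le (hC : 1 ≤ C)
    {u : List (ι × (S → Matrix (Fin N) (Fin N) ℂ))}
    (hu : ∀ x ∈ u, IsSwapLetter C β θ x) {n : ℕ} (hn : u.length ≤ n)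
    {A H : Matrix (Fin N) (Fin N) ℂ} (hA : ‖A‖ ≤ C ^ n) (hH : ‖H‖ ≤ C ^ n) (s : S) (i : Fin N) :
    ∑ j, ∑ c, ‖A i j‖ * ‖H c i‖ * entrySuffixSum (u.map fun x => x.2 s) j c i ≤
      (u.length + 1) * (2 * (C ^ n) ^ 3 * √N) := by
  have hB : 0 ≤ C ^ n := by positivity
  simp only [entrySuffixSum_wordProd]
  refine (sum_sum_mul_list_sum_le _ _ _ (2 * (C ^ n) ^ 3 * √N) fun v hv => ?_).trans
    (le_of_eq (by simp))
  have hvu : v <:+ u := (List.mem_tails _ _).1 hv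
  refine sum_sum_suffix_le hB (fun _ => norm_nonneg _) (fun _ => norm_nonneg _) ?_ ?_ ?_
  · exact (sum_norm_sq_row_le A i).trans (pow_le_pow_left₀ (norm_nonneg _) hA 2)
  · exact (sum_norm_sq_col_le _ i).trans (pow_le_pow_left₀ (norm_nonneg _)
      (norm_wordProd_le_of_length_le hC (fun x hx => hu x (hvu.subset hx))
        (hvu.length_le.trans hn) s) 2)
  · exact (sum_norm_sq_col_le H i).trans (pow_le_pow_left₀ (norm_nonneg _) hH 2)

lemma sum_sum_mul_entryPrefixSum_mul_entrySuffixSum_le (hC : 1 ≤ C)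
    {x : ι × (S → Matrix (Fin N) (Fin N) ℂ)} {u : List (ι × (S → Matrix (Fin N) (Fin N) ℂ))}
    (hx : IsSwapLetter C β θ x) (hu : ∀ x ∈ u, IsSwapLetter C β θ x) {n : ℕ}
    (hn : u.length + 1 ≤ n) {A : Matrix (Fin N) (Fin N) ℂ} (hA : ‖A‖ ≤ C ^ n) (s : S)
    (i : Fin N) {R : ℝ} (hR : ∀ v ∈ u.inits, √(∑ c, ‖wordProd (x :: v) s c c‖ ^ 2) ≤ R) :
    ∑ j, ∑ c, ‖A i j‖ * entryPrefixSum (x.2 s) (u.map fun x => x.2 s) j c *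
        entrySuffixSum (u.map fun x => x.2 s) j c i ≤
      (u.length + 1) * ((u.length + 1) *
        (2 * (C ^ n) ^ 3 * √N + 2 * (C ^ n) ^ 2 * √N * R)) := by
  have hB : 0 ≤ C ^ n := by positivity
  simp only [entrySuffixSum_wordProd]
  refine (sum_sum_mul_list_sum_le _ _ _ ((u.length + 1) *
    (2 * (C ^ n) ^ 3 * √N + 2 * (C ^ n) ^ 2 * √N * R)) fun v hv => ?_).trans
    (le_of_eq (by simp))
  have hvu : v <:+ u := (List.mem_tails _ _).1 hv
  have e : ∀ j c, ‖A i j‖ * entryPrefixSum (x.2 s) (u.map fun x => x.2 s) j c *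
      (‖wordProd v s j i‖ + ‖wordProd v s c i‖) =
      ‖A i j‖ * (‖wordProd v s j i‖ + ‖wordProd v s c i‖) *
        (u.inits.map fun v => ‖wordProd (x :: v) s c j‖ + ‖wordProd (x :: v) s c c‖).sum := by
    intro j c
    rw [entryPrefixSum_wordProd]
    ring
  simp only [e]
  refine (sum_sum_mul_list_sum_le _ _ _
    (2 * (C ^ n) ^ 3 * √N + 2 * (C ^ n) ^ 2 * √N * R) fun y hy => ?_).trans (le_of_eq (by simp))
  have hyu : y <+: u := (List.mem_inits _ _).1 hy
  have hgood : ∀ z ∈ x :: y, IsSwapLetter C β θ z := by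
    intro z hz
    rcases List.mem_cons.1 hz with rfl | hz
    · exact hx
    · exact hu z (hyu.subset hz)
  refine (sum_sum_prefix_suffix_le (X := fun c j => ‖wordProd (x :: y) s c j‖) hB
    (fun _ => norm_nonneg _) (fun _ => norm_nonneg _) (fun _ _ => norm_nonneg _) ?_ ?_ ?_).trans ?_
  · exact (sum_norm_sq_row_le A i).trans (pow_le_pow_left₀ (norm_nonneg _) hA 2)
  · exact (sum_norm_sq_col_le _ i).trans (pow_le_pow_left₀ (norm_nonneg _)
      (norm_wordProd_le_of_length_le hC (fun x hx => hu x (hvu.subset hx))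
        (hvu.length_le.trans (by omega)) s) 2)
  · exact fun j => (sum_norm_sq_col_le _ j).trans (pow_le_pow_left₀ (norm_nonneg _)
      (norm_wordProd_le_of_length_le hC hgood
        (by have := hyu.length_le; simp only [List.length_cons]; omega) s) 2)
  · gcongr
    exact hR y hy

end Words

section Step

open scoped Matrix.Norms.L2Operator

variable {N : ℕ} {ι S Q : Type} {C : ℝ} {β : Fin N → Q} {θ : ι → Fin N → Fin N → Equiv.Perm S}

lemma norm_kernel_mul_sub_le (hC : 1 ≤ C) {x y : ι × (S → Matrix (Fin N) (Fin N) ℂ)}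
    {u : List (ι × (S → Matrix (Fin N) (Fin N) ℂ))} (hx : IsSwapLetter C β θ x)
    (hy : IsSwapLetter C β θ y) (hu : ∀ z ∈ u, IsSwapLetter C β θ z) (hxy : x.1 ≠ y.1)
    {W : Fin N → Fin N → ℝ} {κ : ℝ} (hκ : 0 ≤ κ) (hW0 : ∀ j c, 0 ≤ W j c)
    (hWβ : ∀ j c, W j c ≠ 0 → β j = β c) (hWκ : ∀ j c, j ≠ c → W j c ≤ κ / N)
    (s : S) (i j c : Fin N) :
    ‖(W j c : ℂ) * (star (wordProd (x :: y :: u) (θ y.1 j c s) i i) *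
          (x.2 (θ y.1 j c s) i j * wordProd (y :: u) (θ y.1 j c s) j i)) -
        star (wordProd (x :: y :: u) s i i) * (x.2 s i j * W j c * wordProd (y :: u) s c i)‖ ≤
      κ / N * (colConst C (u.length + 2) * (‖x.2 s i j‖ * ‖wordProd (y :: u) s c i‖ *
          entrySuffixSum ((x :: y :: u).map fun z => z.2 s) j c i) +
        C ^ (u.length + 2) * (biConst C u.length + (1 + 2 * colConst C u.length)) *
          (‖x.2 s i j‖ * entryPrefixSum (y.2 s) (u.map fun z => z.2 s) j c *
            entrySuffixSum (u.map fun z => z.2 s) j c i)) := by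
  have hC0 : 0 ≤ C := by linarith
  have hyu : ∀ z ∈ y :: u, IsSwapLetter C β θ z := List.forall_mem_cons.2 ⟨hy, hu⟩
  have hxyu : ∀ z ∈ x :: y :: u, IsSwapLetter C β θ z := List.forall_mem_cons.2 ⟨hx, hyu⟩
  have hk1 := colConst_nonneg hC0 (u.length + 2)
  have hk2 := colConst_nonneg hC0 u.length
  have hk3 := biConst_nonneg hC0 u.length
  have hE1 := entrySuffixSum_nonneg ((x :: y :: u).map fun z => z.2 s) j c i
  have hE2 := entryPrefixSum_nonneg (y.2 s) (u.map fun z => z.2 s) j c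
  have hE3 := entrySuffixSum_nonneg (u.map fun z => z.2 s) j c i
  have hrhs : 0 ≤ κ / N * (colConst C (u.length + 2) * (‖x.2 s i j‖ * ‖wordProd (y :: u) s c i‖ *
          entrySuffixSum ((x :: y :: u).map fun z => z.2 s) j c i) +
        C ^ (u.length + 2) * (biConst C u.length + (1 + 2 * colConst C u.length)) *
          (‖x.2 s i j‖ * entryPrefixSum (y.2 s) (u.map fun z => z.2 s) j c *
            entrySuffixSum (u.map fun z => z.2 s) j c i)) := by positivity
  by_cases hW : W j c = 0
  · rw [hW]; simpa using hrhs
  have hβ := hWβ j c hW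
  have hx' : x.2 (θ y.1 j c s) = x.2 s := hx.map_of_ne y.1 j c s hβ hxy
  rw [hx']
  by_cases hjc : j = c
  · subst hjc
    rw [wordProd_swap_self hxyu, wordProd_swap_self hyu]
    refine le_trans (le_of_eq ?_) hrhs
    rw [norm_eq_zero]
    ring
  have hF : ‖wordProd (x :: y :: u) (θ y.1 j c s) i i - wordProd (x :: y :: u) s i i‖ ≤
      colConst C (u.length + 2) *
        entrySuffixSum ((x :: y :: u).map fun z => z.2 s) j c i := by
    have h := norm_prod_apply_sub_le (swapRelated_map hxyu y.1 hβ s) hC0 (by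
      simp only [List.mem_map]
      rintro _ ⟨z, hz, rfl⟩
      exact (hxyu z hz).norm_le s) i
    rwa [List.length_map] at h
  have hH : ‖wordProd (y :: u) (θ y.1 j c s) j i - wordProd (y :: u) s c i‖ ≤
      (biConst C u.length + (1 + 2 * colConst C u.length)) *
        entryPrefixSum (y.2 s) (u.map fun z => z.2 s) j c *
          entrySuffixSum (u.map fun z => z.2 s) j c i := by
    have h := norm_swapped_prod_apply_sub_le (swapRelated_map hu y.1 hβ s) hC0 (by
      simp only [List.mem_map]
      rintro _ ⟨z, hz, rfl⟩
      exact (hu z hz).norm_le s) (y.2 s) i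
    rw [List.length_map] at h
    rw [wordProd_cons, wordProd_cons, hy.map_of_eq y.1 j c s hβ rfl]
    exact h
  have hFB : ‖wordProd (x :: y :: u) (θ y.1 j c s) i i‖ ≤ C ^ (u.length + 2) :=
    (norm_apply_le_l2_opNorm _ _ _).trans (norm_wordProd_le hC hxyu _)
  set F' := wordProd (x :: y :: u) (θ y.1 j c s) i i
  set F := wordProd (x :: y :: u) s i i
  set H' := wordProd (y :: u) (θ y.1 j c s) j i
  set H := wordProd (y :: u) s c i
  have e : (W j c : ℂ) * (star F' * (x.2 s i j * H')) - star F * (x.2 s i j * W j c * H) =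
      (W j c : ℂ) * (x.2 s i j * (star (F' - F) * H + star F' * (H' - H))) := by
    rw [star_sub]; ring
  rw [e, norm_mul, Complex.norm_real, Real.norm_of_nonneg (hW0 j c), norm_mul]
  have h1 : ‖star (F' - F) * H + star F' * (H' - H)‖ ≤ ‖F' - F‖ * ‖H‖ + ‖F'‖ * ‖H' - H‖ := by
    refine (norm_add_le _ _).trans ?_
    rw [norm_mul, norm_mul, norm_star, norm_star]
  refine mul_le_mul (hWκ j c hjc) ?_ (by positivity) (by positivity)
  calc _ ≤ ‖x.2 s i j‖ * (‖F' - F‖ * ‖H‖ + ‖F'‖ * ‖H' - H‖) := by gcongr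
    _ ≤ ‖x.2 s i j‖ * ((colConst C (u.length + 2) *
          entrySuffixSum ((x :: y :: u).map fun z => z.2 s) j c i) * ‖H‖ +
          C ^ (u.length + 2) * ((biConst C u.length + (1 + 2 * colConst C u.length)) *
        entryPrefixSum (y.2 s) (u.map fun z => z.2 s) j c *
          entrySuffixSum (u.map fun z => z.2 s) j c i)) := by gcongr
    _ = _ := by ring

lemma sum_norm_sq_diag_eq [Fintype S] (x y : ι × (S → Matrix (Fin N) (Fin N) ℂ))
    (u : List (ι × (S → Matrix (Fin N) (Fin N) ℂ))) (θ : ι → Fin N → Fin N → Equiv.Perm S)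
    {W : Fin N → Fin N → ℝ} (hW1 : ∀ j, ∑ c, W j c = 1) (i : Fin N) :
    ((∑ s, ‖wordProd (x :: y :: u) s i i‖ ^ 2 : ℝ) : ℂ) =
      ∑ s, ∑ j, ∑ c, (W j c : ℂ) * (star (wordProd (x :: y :: u) (θ y.1 j c s) i i) *
          (x.2 (θ y.1 j c s) i j * wordProd (y :: u) (θ y.1 j c s) j i)) := by
  set φ : Fin N → S → ℂ := fun j s =>
    star (wordProd (x :: y :: u) s i i) * (x.2 s i j * wordProd (y :: u) s j i) with hφ
  calc ((∑ s, ‖wordProd (x :: y :: u) s i i‖ ^ 2 : ℝ) : ℂ) = ∑ s, ∑ j, φ j s := by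
        push_cast
        refine Finset.sum_congr rfl fun s _ => ?_
        rw [hφ, ← Finset.mul_sum, ← Matrix.mul_apply, ← wordProd_cons]
        exact (Complex.conj_mul' _).symm
    _ = ∑ j, ∑ c, ∑ s, (W j c : ℂ) * φ j (θ y.1 j c s) := by
        rw [Finset.sum_comm]
        refine Finset.sum_congr rfl fun j _ => ?_
        have h1 : ∀ c, ∑ s, (W j c : ℂ) * φ j (θ y.1 j c s) = (W j c : ℂ) * ∑ s, φ j s := by
          intro c
          rw [← Finset.mul_sum, Equiv.sum_comp (θ y.1 j c) (φ j)]
        simp only [h1]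
        rw [← Finset.sum_mul, ← Complex.ofReal_sum, hW1, Complex.ofReal_one, one_mul]
    _ = ∑ s, ∑ j, ∑ c, (W j c : ℂ) * φ j (θ y.1 j c s) := by
        rw [Finset.sum_comm]
        conv_rhs => rw [Finset.sum_comm]
        rw [Finset.sum_comm]
        refine Finset.sum_congr rfl fun j _ => ?_
        rw [Finset.sum_comm]

/-- The constant of `diagSq_cons_cons_le`. -/
def stepConst (C : ℝ) (m : ℕ) : ℝ :=
  (C ^ (m + 2)) ^ 3 + colConst C (m + 2) * ((m + 3) * (2 * (C ^ (m + 2)) ^ 3)) +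
    C ^ (m + 2) * (biConst C m + (1 + 2 * colConst C m)) *
      ((m + 1) * ((m + 1) * (2 * (C ^ (m + 2)) ^ 3 + 2 * (C ^ (m + 2)) ^ 2 * (m + 1))))

lemma sum_norm_sq_diag_le [Fintype S] (hC : 1 ≤ C) {x y : ι × (S → Matrix (Fin N) (Fin N) ℂ)}
    {u : List (ι × (S → Matrix (Fin N) (Fin N) ℂ))} (hx : IsSwapLetter C β θ x)
    (hy : IsSwapLetter C β θ y) (hu : ∀ z ∈ u, IsSwapLetter C β θ z) (hxy : x.1 ≠ y.1)
    {W : Fin N → Fin N → ℝ} {κ : ℝ} (hκ : 0 ≤ κ) (hW0 : ∀ j c, 0 ≤ W j c)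
    (hW1 : ∀ j, ∑ c, W j c = 1) (hWβ : ∀ j c, W j c ≠ 0 → β j = β c)
    (hWκ : ∀ j c, j ≠ c → W j c ≤ κ / N) (i : Fin N) {R : S → ℝ}
    (hR : ∀ s, ∀ v ∈ u.inits, √(∑ c, ‖wordProd (y :: v) s c c‖ ^ 2) ≤ R s) :
    ∑ s, ‖wordProd (x :: y :: u) s i i‖ ^ 2 ≤
      ∑ s, (C ^ (u.length + 2) *
          ‖(x.2 s * Matrix.of (fun j c => (W j c : ℂ)) * wordProd (y :: u) s) i i‖ +
        κ / N * (colConst C (u.length + 2) *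
            ((u.length + 3) * (2 * (C ^ (u.length + 2)) ^ 3 * √N)) +
          C ^ (u.length + 2) * (biConst C u.length + (1 + 2 * colConst C u.length)) *
            ((u.length + 1) * ((u.length + 1) * (2 * (C ^ (u.length + 2)) ^ 3 * √N +
              2 * (C ^ (u.length + 2)) ^ 2 * √N * R s))))) := by
  have hC0 : 0 ≤ C := by linarith
  have hyu : ∀ z ∈ y :: u, IsSwapLetter C β θ z := List.forall_mem_cons.2 ⟨hy, hu⟩
  have hxyu : ∀ z ∈ x :: y :: u, IsSwapLetter C β θ z := List.forall_mem_cons.2 ⟨hx, hyu⟩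
  have hk1 := colConst_nonneg hC0 (u.length + 2)
  have hk2 := colConst_nonneg hC0 u.length
  have hk3 := biConst_nonneg hC0 u.length
  have h0 : 0 ≤ ∑ s, ‖wordProd (x :: y :: u) s i i‖ ^ 2 :=
    Finset.sum_nonneg fun s _ => by positivity
  rw [← Real.norm_of_nonneg h0, ← Complex.norm_real, sum_norm_sq_diag_eq x y u θ hW1 i]
  refine (norm_sum_le _ _).trans (Finset.sum_le_sum fun s _ => ?_)
  have hFB : ‖wordProd (x :: y :: u) s i i‖ ≤ C ^ (u.length + 2) :=
    (norm_apply_le_l2_opNorm _ _ _).trans (norm_wordProd_le hC hxyu _)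
  have hsplit : ∀ f g : Fin N → Fin N → ℂ, ∑ j, ∑ c, f j c =
      ∑ j, ∑ c, g j c + ∑ j, ∑ c, (f j c - g j c) := by
    intro f g
    simp only [Finset.sum_sub_distrib]
    ring
  rw [hsplit _ fun j c =>
    star (wordProd (x :: y :: u) s i i) * (x.2 s i j * W j c * wordProd (y :: u) s c i)]
  refine (norm_add_le _ _).trans (add_le_add ?_ ?_)
  · have e : ∑ j, ∑ c, star (wordProd (x :: y :: u) s i i) *
        (x.2 s i j * W j c * wordProd (y :: u) s c i) = star (wordProd (x :: y :: u) s i i) *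
          (x.2 s * Matrix.of (fun j c => (W j c : ℂ)) * wordProd (y :: u) s) i i := by
      rw [Matrix.mul_apply, Finset.sum_comm]
      simp only [Matrix.mul_apply, Matrix.of_apply, Finset.sum_mul, Finset.mul_sum]
    rw [e, norm_mul, norm_star]
    gcongr
  · have hxB : ‖x.2 s‖ ≤ C ^ (u.length + 2) :=
      (hx.norm_le s).trans (le_self_pow₀ hC (by omega))
    have hHB : ‖wordProd (y :: u) s‖ ≤ C ^ (u.length + 2) :=
      norm_wordProd_le_of_length_le hC hyu (by simp) s
    have t1 := sum_sum_mul_entrySuffixSum_le hC hxyu (n := u.length + 2) (by simp) hxB hHB s i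
    have t2 := sum_sum_mul_entryPrefixSum_mul_entrySuffixSum_le hC hy hu (n := u.length + 2)
      (by omega) hxB s i (hR s)
    refine (norm_sum_le _ _).trans ((Finset.sum_le_sum fun j _ => norm_sum_le _ _).trans
      ((Finset.sum_le_sum fun j _ => Finset.sum_le_sum fun c _ =>
        norm_kernel_mul_sub_le hC hx hy hu hxy hκ hW0 hWβ hWκ s i j c).trans ?_))
    simp only [← Finset.mul_sum, Finset.sum_add_distrib]
    have hlen : (((x :: y :: u).length : ℝ) + 1) = u.length + 3 := by
      push_cast [List.length_cons]; ring
    rw [hlen] at t1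
    gcongr

lemma diagSq_cons_cons_le [Fintype S] (hC : 1 ≤ C) {x y : ι × (S → Matrix (Fin N) (Fin N) ℂ)}
    {u : List (ι × (S → Matrix (Fin N) (Fin N) ℂ))} (hx : IsSwapLetter C β θ x)
    (hy : IsSwapLetter C β θ y) (hu : ∀ z ∈ u, IsSwapLetter C β θ z) (hxy : x.1 ≠ y.1)
    {W : Fin N → Fin N → ℝ} {κ ρ ε : ℝ} (hκ : 0 ≤ κ) (hε : 0 ≤ ε) (hρ : 0 ≤ ρ) (hN : 0 < N)
    (hW0 : ∀ j c, 0 ≤ W j c)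
    (hW1 : ∀ j, ∑ c, W j c = 1) (hWβ : ∀ j c, W j c ≠ 0 → β j = β c)
    (hWκ : ∀ j c, j ≠ c → W j c ≤ κ / N) (hW2 : ∑ j, ∑ c, W j c ^ 2 ≤ ρ * N)
    (hind : ∀ v ∈ u.inits, diagSq (y :: v) ≤ ε * (Fintype.card S * N)) :
    diagSq (x :: y :: u) ≤
      stepConst C u.length * (√ρ + κ / √N + κ * √ε) * (Fintype.card S * N) := by
  have hC0 : 0 ≤ C := by linarith
  have hN' : (0 : ℝ) < N := by exact_mod_cast hN
  have hyu : ∀ z ∈ y :: u, IsSwapLetter C β θ z := List.forall_mem_cons.2 ⟨hy, hu⟩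
  have hk1 := colConst_nonneg hC0 (u.length + 2)
  have hk2 := colConst_nonneg hC0 u.length
  have hk3 := biConst_nonneg hC0 u.length
  set R : S → ℝ := fun s =>
    (u.inits.map fun v => √(∑ c, ‖wordProd (y :: v) s c c‖ ^ 2)).sum with hRdef
  have hR : ∀ s, ∀ v ∈ u.inits, √(∑ c, ‖wordProd (y :: v) s c c‖ ^ 2) ≤ R s := by
    intro s v hv
    refine List.single_le_sum ?_ _ (List.mem_map.2 ⟨v, hv, rfl⟩)
    simp only [List.mem_map]
    rintro _ ⟨v, -, rfl⟩
    positivity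
  have hRsum : ∑ s, R s ≤ (u.length + 1) * (√ε * √N * Fintype.card S) := by
    have key : ∀ v ∈ u.inits, ∑ s, √(∑ c, ‖wordProd (y :: v) s c c‖ ^ 2) ≤
        √ε * √N * Fintype.card S := by
      intro v hv
      have h1 := sq_sum_le_card_mul_sum_sq (s := (Finset.univ : Finset S))
        (f := fun s => √(∑ c, ‖wordProd (y :: v) s c c‖ ^ 2))
      have h2 : ∑ s, √(∑ c, ‖wordProd (y :: v) s c c‖ ^ 2) ^ 2 = diagSq (y :: v) :=
        Finset.sum_congr rfl fun s _ => Real.sq_sqrt (Finset.sum_nonneg fun c _ => by positivity)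
      rw [h2, Finset.card_univ] at h1
      refine le_of_sq_le_sq (h1.trans ?_) (by positivity)
      rw [mul_pow, mul_pow, Real.sq_sqrt hε, Real.sq_sqrt hN'.le]
      calc _ ≤ (Fintype.card S : ℝ) * (ε * (Fintype.card S * N)) := by
            gcongr; exact hind v hv
        _ = _ := by ring
    have hcomm : ∑ s, R s =
        (u.inits.map fun v => ∑ s, √(∑ c, ‖wordProd (y :: v) s c c‖ ^ 2)).sum := by
      simp only [hRdef]
      induction u.inits with
      | nil => simp
      | cons a l ih => simp [Finset.sum_add_distrib, ih]
    rw [hcomm]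
    refine (List.sum_le_card_nsmul _ (√ε * √N * Fintype.card S) ?_).trans (le_of_eq ?_)
    · simp only [List.mem_map]
      rintro _ ⟨v, hv, rfl⟩
      exact key v hv
    · simp
  set B := C ^ (u.length + 2) with hB
  have hB1 : 0 ≤ B := by positivity
  have hmain : ∀ s, ∑ i, ‖(x.2 s * Matrix.of (fun j c => (W j c : ℂ)) *
      wordProd (y :: u) s) i i‖ ≤ B ^ 2 * √ρ * N := by
    intro s
    have hxB : ‖x.2 s‖ ≤ B := (hx.norm_le s).trans (le_self_pow₀ hC (by omega))
    have hHB : ‖wordProd (y :: u) s‖ ≤ B := norm_wordProd_le_of_length_le hC hyu (by simp) s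
    have hWsq : ∑ j, ∑ c, ‖Matrix.of (fun j c => (W j c : ℂ)) j c‖ ^ 2 ≤ ρ * N := by
      simpa [sq_abs] using hW2
    have h2 : ∑ i, ∑ j, ‖(x.2 s * Matrix.of (fun j c => (W j c : ℂ)) *
        wordProd (y :: u) s) i j‖ ^ 2 ≤ (B ^ 2 * √ρ * √N) ^ 2 := by
      refine (sum_norm_sq_mul_right_le _ _).trans ?_
      calc _ ≤ (‖x.2 s‖ ^ 2 * (ρ * N)) * ‖wordProd (y :: u) s‖ ^ 2 := by
            gcongr
            exact (sum_norm_sq_mul_left_le _ _).trans (by gcongr)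
        _ ≤ (B ^ 2 * (ρ * N)) * B ^ 2 := by gcongr
        _ = _ := by
            rw [mul_pow, mul_pow, Real.sq_sqrt hρ, Real.sq_sqrt hN'.le]; ring
    refine (sum_norm_diag_le _ (by positivity) h2).trans (le_of_eq ?_)
    rw [mul_assoc, Real.mul_self_sqrt hN'.le]
  have hstep : diagSq (x :: y :: u) ≤ ∑ s, (B * (B ^ 2 * √ρ * N) +
      κ * (colConst C (u.length + 2) * ((u.length + 3) * (2 * B ^ 3 * √N)) +
          B * (biConst C u.length + (1 + 2 * colConst C u.length)) *
            ((u.length + 1) * ((u.length + 1) * (2 * B ^ 3 * √N + 2 * B ^ 2 * √N * R s))))) := by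
    unfold diagSq
    rw [Finset.sum_comm]
    refine (Finset.sum_le_sum fun i _ =>
      sum_norm_sq_diag_le hC hx hy hu hxy hκ hW0 hW1 hWβ hWκ i hR).trans ?_
    rw [Finset.sum_comm]
    refine Finset.sum_le_sum fun s _ => ?_
    rw [Finset.sum_add_distrib, ← Finset.mul_sum, Finset.sum_const, Finset.card_univ,
      Fintype.card_fin, nsmul_eq_mul]
    refine add_le_add (by gcongr; exact hmain s) (le_of_eq ?_)
    rw [← mul_assoc, mul_div_cancel₀ _ hN'.ne']
  refine hstep.trans ?_
  set k1 := colConst C (u.length + 2)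
  set k2 := biConst C u.length + (1 + 2 * colConst C u.length) with hk2def
  have hk20 : 0 ≤ k2 := by positivity
  set m : ℝ := (u.length : ℝ) with hm
  have hm0 : 0 ≤ m := by positivity
  set σ := (Fintype.card S : ℝ) with hσ
  have hσ0 : 0 ≤ σ := by positivity
  have hsN : √(N : ℝ) * √N = N := Real.mul_self_sqrt hN'.le
  have hsN0 : 0 < √(N : ℝ) := Real.sqrt_pos.2 hN'
  have hexp : ∑ s, (B * (B ^ 2 * √ρ * N) +
      κ * (k1 * ((m + 3) * (2 * B ^ 3 * √N)) +
          B * k2 * ((m + 1) * ((m + 1) * (2 * B ^ 3 * √N + 2 * B ^ 2 * √N * R s))))) =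
      σ * (B ^ 3 * √ρ * N) + σ * (κ * (k1 * ((m + 3) * (2 * B ^ 3)) +
        B * k2 * ((m + 1) * ((m + 1) * (2 * B ^ 3)))) * √N) +
        κ * (B * k2 * ((m + 1) * ((m + 1) * (2 * B ^ 2 * √N)))) * ∑ s, R s := by
    rw [Finset.mul_sum, hσ, ← nsmul_eq_mul, ← nsmul_eq_mul, ← Finset.card_univ,
      ← Finset.sum_const, ← Finset.sum_const, ← Finset.sum_add_distrib,
      ← Finset.sum_add_distrib]
    exact Finset.sum_congr rfl fun s _ => by ring
  rw [hexp]
  have hK : stepConst C u.length = B ^ 3 + k1 * ((m + 3) * (2 * B ^ 3)) +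
      B * k2 * ((m + 1) * ((m + 1) * (2 * B ^ 3 + 2 * B ^ 2 * (m + 1)))) := rfl
  have a1 : σ * (B ^ 3 * √ρ * N) ≤ stepConst C u.length * √ρ * (σ * N) := by
    have : B ^ 3 ≤ stepConst C u.length := by
      rw [hK, add_assoc]
      exact le_add_of_nonneg_right (by positivity)
    calc _ = B ^ 3 * √ρ * (σ * N) := by ring
      _ ≤ _ := by gcongr
  have a2 : σ * (κ * (k1 * ((m + 3) * (2 * B ^ 3)) +
        B * k2 * ((m + 1) * ((m + 1) * (2 * B ^ 3)))) * √N) ≤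
      stepConst C u.length * (κ / √N) * (σ * N) := by
    have : k1 * ((m + 3) * (2 * B ^ 3)) + B * k2 * ((m + 1) * ((m + 1) * (2 * B ^ 3))) ≤
        stepConst C u.length := by
      rw [hK]
      have : B * k2 * ((m + 1) * ((m + 1) * (2 * B ^ 3))) ≤
        B * k2 * ((m + 1) * ((m + 1) * (2 * B ^ 3 + 2 * B ^ 2 * (m + 1)))) := by
        gcongr
        exact le_add_of_nonneg_right (by positivity)
      have : 0 ≤ B ^ 3 := by positivity
      linarith
    have e : κ / √N * N = κ * √N := by
      rw [div_mul_eq_mul_div, div_eq_iff hsN0.ne', mul_assoc, hsN]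
    calc _ = (k1 * ((m + 3) * (2 * B ^ 3)) +
          B * k2 * ((m + 1) * ((m + 1) * (2 * B ^ 3)))) * (σ * (κ * √N)) := by ring
      _ ≤ stepConst C u.length * (σ * (κ * √N)) := by gcongr
      _ = _ := by rw [← e]; ring
  have a3 : κ * (B * k2 * ((m + 1) * ((m + 1) * (2 * B ^ 2 * √N)))) * ∑ s, R s ≤
      stepConst C u.length * (κ * √ε) * (σ * N) := by
    have : B * k2 * ((m + 1) * ((m + 1) * (2 * B ^ 2 * (m + 1)))) ≤ stepConst C u.length := by
      rw [hK]
      have h1 : B * k2 * ((m + 1) * ((m + 1) * (2 * B ^ 2 * (m + 1)))) ≤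
        B * k2 * ((m + 1) * ((m + 1) * (2 * B ^ 3 + 2 * B ^ 2 * (m + 1)))) := by
        gcongr
        exact le_add_of_nonneg_left (by positivity)
      have h2 : 0 ≤ B ^ 3 := by positivity
      have h3 : 0 ≤ k1 * ((m + 3) * (2 * B ^ 3)) := by positivity
      linarith
    calc _ ≤ κ * (B * k2 * ((m + 1) * ((m + 1) * (2 * B ^ 2 * √N)))) *
          ((m + 1) * (√ε * √N * σ)) := by gcongr
      _ = (B * k2 * ((m + 1) * ((m + 1) * (2 * B ^ 2 * (m + 1))))) *
          (κ * √ε * σ) * (√N * √N) := by ring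
      _ ≤ stepConst C u.length * (κ * √ε * σ) * (√N * √N) := by gcongr
      _ = _ := by rw [hsN]; ring
  refine (add_le_add (add_le_add a1 a2) a3).trans (le_of_eq ?_)
  ring

end Step

section Induction

open scoped Matrix.Norms.L2Operator

lemma exists_step_parameters {K q ε : ℝ} (hε : 0 < ε) :
    ∃ η > 0, ∃ ε' > 0, ∀ᶠ N : ℕ in atTop,
      K * (√(q / N + q * η) + η⁻¹ / √N + η⁻¹ * √ε') ≤ ε := by
  have h1 : Tendsto (fun η : ℝ => K * √(q * η)) (nhdsWithin 0 (Set.Ioi 0)) (nhds 0) := by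
    have : Continuous (fun η : ℝ => K * √(q * η)) := by fun_prop
    simpa using (this.tendsto 0).mono_left nhdsWithin_le_nhds
  obtain ⟨η, hη1, hη0⟩ := ((h1.eventually (gt_mem_nhds (half_pos hε))).and
    self_mem_nhdsWithin).exists
  have h2 : Tendsto (fun ε' : ℝ => K * (√(q * η) + η⁻¹ * √ε')) (nhdsWithin 0 (Set.Ioi 0))
      (nhds (K * √(q * η))) := by
    have : Continuous (fun ε' : ℝ => K * (√(q * η) + η⁻¹ * √ε')) := by fun_prop
    simpa using (this.tendsto 0).mono_left nhdsWithin_le_nhds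
  obtain ⟨ε', hε1, hε0⟩ := ((h2.eventually (gt_mem_nhds (hη1.trans (half_lt_self hε)))).and
    self_mem_nhdsWithin).exists
  refine ⟨η, hη0, ε', hε0, ?_⟩
  have hN : Tendsto (fun N : ℕ => (N : ℝ)) atTop atTop := tendsto_natCast_atTop_atTop
  have h3 : Tendsto (fun N : ℕ => K * (√(q / N + q * η) + η⁻¹ / √N + η⁻¹ * √ε')) atTop
      (nhds (K * (√(0 + q * η) + 0 + η⁻¹ * √ε'))) := by
    have hs : Tendsto (fun N : ℕ => η⁻¹ / √(N : ℝ)) atTop (nhds 0) :=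
      (Real.tendsto_sqrt_atTop.comp hN).const_div_atTop _
    exact ((((((hN.const_div_atTop q).add_const _).sqrt).add hs).add_const _).const_mul K)
  have h4 : K * (√(0 + q * η) + 0 + η⁻¹ * √ε') < ε := by simpa using hε1
  exact (h3.eventually (gt_mem_nhds h4)).mono fun N h => h.le

/-- Averaged diagonals of alternating words of zero-diagonal letters become small. -/
lemma eventually_diagSq_le {C : ℝ} (hC : 1 ≤ C) (q : ℕ) (n : ℕ) :
    ∀ ε > 0, ∀ᶠ N : ℕ in atTop, ∀ (β : Fin N → Fin q) (ι S : Type) [Fintype S]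
      (θ : ι → Fin N → Fin N → Equiv.Perm S) (u : List (ι × (S → Matrix (Fin N) (Fin N) ℂ))),
      u.length = n → u ≠ [] → u.IsChain (fun x y => x.1 ≠ y.1) →
      (∀ x ∈ u, IsSwapLetter C β θ x) → diagSq u ≤ ε * (Fintype.card S * N) := by
  induction n using Nat.strong_induction_on with
  | _ n ih =>
    intro ε hε
    obtain ⟨η, hη, ε', hε', hN⟩ := exists_step_parameters (K := stepConst C (n - 2)) (q := q) hε
    have ih' := (Finset.eventually_all (Finset.range n)).2
      fun m hm => ih m (Finset.mem_range.1 hm) ε' hε'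
    filter_upwards [hN, ih', eventually_gt_atTop 0] with N hN ih' hN0
    intro β ι S _ θ u hun hne hchain hu
    have hN0' : (0 : ℝ) < N := by exact_mod_cast hN0
    match u, hun, hne, hchain, hu with
    | [x], _, _, _, hu =>
      have hx := hu x List.mem_cons_self
      have : diagSq [x] = 0 := by simp [diagSq, wordProd, hx.diag_eq_zero]
      rw [this]
      positivity
    | x :: y :: u, hun, _, hchain, hu =>
      obtain ⟨W, hW0, hW1, hWβ, hWκ, hW2⟩ := exists_block_kernel β hη
      rw [List.isChain_cons_cons] at hchain
      have hlen : u.length = n - 2 := by simp at hun; omega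
      refine (diagSq_cons_cons_le (κ := η⁻¹) (ρ := q / N + q * η) (ε := ε') hC
        (hu x (by simp)) (hu y (by simp)) (fun z hz => hu z (by simp [hz])) hchain.1
        (by positivity) hε'.le (by positivity) hN0 hW0 hW1 hWβ hWκ ?_ ?_).trans ?_
      · refine hW2.trans (le_of_eq ?_)
        field_simp
      · intro v hv
        have hv' : v <+: u := (List.mem_inits _ _).1 hv
        have hyv : y :: v <+: y :: u := List.prefix_cons_inj y |>.2 hv'
        refine ih' (v.length + 1) ?_ β ι S θ (y :: v) (by simp) (by simp)
          (hchain.2.prefix hyv) fun z hz => hu z (List.mem_cons_of_mem _ (hyv.subset hz))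
        have := hv'.length_le
        simp at hun ⊢
        omega
      · rw [hlen]
        gcongr

end Induction

section Monomials

open scoped Matrix.Norms.L2Operator

variable {N : ℕ} {K : Type}

lemma norm_submatrix_perm_le (M : Matrix (Fin N) (Fin N) ℂ) (σ : Equiv.Perm (Fin N)) :
    ‖M.submatrix σ σ‖ ≤ ‖M‖ := by
  have h : M.submatrix σ σ = σ.permMatrix ℂ * M * (σ⁻¹).permMatrix ℂ := by
    rw [Equiv.Perm.permMatrix, Equiv.Perm.permMatrix, PEquiv.toMatrix_toPEquiv_mul,
      PEquiv.mul_toMatrix_toPEquiv, Matrix.submatrix_submatrix]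
    rfl
  rw [h]
  calc _ ≤ ‖σ.permMatrix ℂ‖ * ‖M‖ * ‖(σ⁻¹).permMatrix ℂ‖ :=
        (norm_mul_le _ _).trans (by gcongr; exact norm_mul_le _ _)
    _ ≤ 1 * ‖M‖ * 1 := by gcongr <;> exact Matrix.permMatrix_l2_opNorm_le _
    _ = ‖M‖ := by ring

lemma dproj_eq_diagonal (M : Matrix (Fin N) (Fin N) ℂ) :
    dproj M = Matrix.diagonal fun i => M i i := by
  ext i j
  by_cases h : i = j
  · subst h; simp [dproj]
  · simp [dproj, h]

lemma dproj_sub (M M' : Matrix (Fin N) (Fin N) ℂ) : dproj (M - M') = dproj M - dproj M' := by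
  simp [dproj_eq_diagonal]

lemma dproj_submatrix (M : Matrix (Fin N) (Fin N) ℂ) (σ : Equiv.Perm (Fin N)) :
    dproj (M.submatrix σ σ) = (dproj M).submatrix σ σ := by
  ext i j
  simp [dproj]

lemma norm_dproj_le (M : Matrix (Fin N) (Fin N) ℂ) : ‖dproj M‖ ≤ ‖M‖ := by
  rw [dproj_eq_diagonal, Matrix.l2_opNorm_diagonal]
  exact (pi_norm_le_iff_of_nonneg (norm_nonneg _)).2 fun i => norm_apply_le_l2_opNorm M i i

lemma norm_sub_dproj_le (M : Matrix (Fin N) (Fin N) ℂ) : ‖M - dproj M‖ ≤ 2 * ‖M‖ := by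
  refine (norm_sub_le _ _).trans ?_
  linarith [norm_dproj_le M]

lemma norm_prod_ofFn_le {m : ℕ} (f : Fin m → Matrix (Fin N) (Fin N) ℂ) {B : ℝ} (hB : 0 ≤ B)
    (hf : ∀ i, ‖f i‖ ≤ B) : ‖(List.ofFn f).prod‖ ≤ B ^ m := by
  induction m with
  | zero => simpa using l2_opNorm_one_le
  | succ m ih =>
    rw [List.ofFn_succ, List.prod_cons, pow_succ']
    exact (norm_mul_le _ _).trans (mul_le_mul (hf 0) (ih _ fun i => hf i.succ) (norm_nonneg _) hB)

lemma norm_prod_ofFn_sub_le {m : ℕ} (f g : Fin m → Matrix (Fin N) (Fin N) ℂ) {B e : ℝ}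
    (hB : 1 ≤ B) (hf : ∀ i, ‖f i‖ ≤ B) (hg : ∀ i, ‖g i‖ ≤ B) (hfg : ∀ i, ‖f i - g i‖ ≤ e)
    (he : 0 ≤ e) : ‖(List.ofFn f).prod - (List.ofFn g).prod‖ ≤ m * B ^ m * e := by
  induction m with
  | zero => simp
  | succ m ih =>
    have hB0 : 0 ≤ B := by linarith
    set F := (List.ofFn fun i : Fin m => f i.succ).prod with hF
    set G := (List.ofFn fun i : Fin m => g i.succ).prod with hG
    have e1 : (List.ofFn f).prod - (List.ofFn g).prod = (f 0 - g 0) * F + g 0 * (F - G) := by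
      rw [List.ofFn_succ, List.ofFn_succ, List.prod_cons, List.prod_cons, ← hF, ← hG]
      noncomm_ring
    have h1 : ‖F‖ ≤ B ^ m := norm_prod_ofFn_le _ hB0 fun i => hf i.succ
    have h2 := ih (fun i => f i.succ) (fun i => g i.succ) (fun i => hf i.succ)
      (fun i => hg i.succ) fun i => hfg i.succ
    rw [e1]
    calc _ ≤ ‖f 0 - g 0‖ * ‖F‖ + ‖g 0‖ * ‖F - G‖ :=
          (norm_add_le _ _).trans (add_le_add (norm_mul_le _ _) (norm_mul_le _ _))
      _ ≤ e * B ^ m + B * (m * B ^ m * e) := by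
          gcongr
          · exact hfg 0
          · exact hg 0
      _ ≤ e * B ^ (m + 1) + B * (m * B ^ m * e) := by
          gcongr
          omega
      _ = _ := by push_cast; ring

lemma norm_monomialEval_le (a : K → Matrix (Fin N) (Fin N) ℂ) {dd dmax : ℕ} (hdd : dd ≤ dmax)
    (kk : ℕ → K) (D : ℕ → Matrix (Fin N) (Fin N) ℂ) {R : ℝ} (hR : 1 ≤ R) (ha : ∀ k, ‖a k‖ ≤ R)
    (hD : ∀ j, ‖D j‖ ≤ R) : ‖monomialEval a dd kk D‖ ≤ (R ^ 2) ^ (dmax + 1) := by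
  have hR0 : 0 ≤ R := by linarith
  have h1 : ‖(List.ofFn fun j : Fin dd => a (kk ((j : ℕ) + 1)) * D ((j : ℕ) + 1)).prod‖ ≤
      (R ^ 2) ^ dd := by
    refine norm_prod_ofFn_le _ (by positivity) fun j => (norm_mul_le _ _).trans ?_
    rw [sq]
    exact mul_le_mul (ha _) (hD _) (norm_nonneg _) hR0
  calc _ ≤ ‖D 0‖ * ‖(List.ofFn fun j : Fin dd => a (kk ((j : ℕ) + 1)) * D ((j : ℕ) + 1)).prod‖ :=
        norm_mul_le _ _
    _ ≤ R ^ 2 * (R ^ 2) ^ dd := by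
        gcongr
        exact (hD 0).trans (le_self_pow₀ hR (by norm_num))
    _ = (R ^ 2) ^ (dd + 1) := by ring
    _ ≤ _ := pow_le_pow_right₀ (one_le_pow₀ hR) (by omega)

lemma norm_monomialEval_sub_le (a : K → Matrix (Fin N) (Fin N) ℂ) {dd dmax : ℕ} (hdd : dd ≤ dmax)
    (kk : ℕ → K) (D D' : ℕ → Matrix (Fin N) (Fin N) ℂ) {R e : ℝ} (hR : 1 ≤ R)
    (ha : ∀ k, ‖a k‖ ≤ R) (hD : ∀ j, ‖D j‖ ≤ R) (hD' : ∀ j, ‖D' j‖ ≤ R) (he : 0 ≤ e)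
    (hDD : ∀ j ≤ dd, ‖D j - D' j‖ ≤ e) :
    ‖monomialEval a dd kk D - monomialEval a dd kk D'‖ ≤
      (dmax + 1) * (R ^ 2) ^ (dmax + 1) * (R * e) := by
  have hR0 : 0 ≤ R := by linarith
  have hR2 : 1 ≤ R ^ 2 := one_le_pow₀ hR
  have hb : ∀ D : ℕ → Matrix (Fin N) (Fin N) ℂ, (∀ j, ‖D j‖ ≤ R) → ∀ j : Fin dd,
      ‖a (kk ((j : ℕ) + 1)) * D ((j : ℕ) + 1)‖ ≤ R ^ 2 := by
    intro D hD j
    refine (norm_mul_le _ _).trans ?_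
    rw [sq]
    exact mul_le_mul (ha _) (hD _) (norm_nonneg _) hR0
  set F := (List.ofFn fun j : Fin dd => a (kk ((j : ℕ) + 1)) * D ((j : ℕ) + 1)).prod with hF
  set G := (List.ofFn fun j : Fin dd => a (kk ((j : ℕ) + 1)) * D' ((j : ℕ) + 1)).prod with hG
  have h1 : ‖F‖ ≤ (R ^ 2) ^ dd := norm_prod_ofFn_le _ (by positivity) (hb D hD)
  have h2 : ‖F - G‖ ≤ dd * (R ^ 2) ^ dd * (R * e) := by
    refine norm_prod_ofFn_sub_le _ _ hR2 (hb D hD) (hb D' hD') (fun j => ?_) (by positivity)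
    rw [← mul_sub]
    exact (norm_mul_le _ _).trans (mul_le_mul (ha _) (hDD _ (by omega)) (norm_nonneg _) hR0)
  have e1 : monomialEval a dd kk D - monomialEval a dd kk D' =
      (D 0 - D' 0) * F + D' 0 * (F - G) := by
    simp only [monomialEval, ← hF, ← hG]
    noncomm_ring
  rw [e1]
  have hRe : e ≤ R * e := le_mul_of_one_le_left he hR
  have hRR : R ≤ R ^ 2 := le_self_pow₀ hR (by norm_num)
  calc _ ≤ ‖D 0 - D' 0‖ * ‖F‖ + ‖D' 0‖ * ‖F - G‖ :=
        (norm_add_le _ _).trans (add_le_add (norm_mul_le _ _) (norm_mul_le _ _))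
    _ ≤ (R * e) * (R ^ 2) ^ (dd + 1) + R ^ 2 * (dd * (R ^ 2) ^ dd * (R * e)) := by
        gcongr
        · exact (hDD 0 (by omega)).trans hRe
        · exact h1.trans (pow_le_pow_right₀ hR2 (by omega))
        · exact (hD' 0).trans hRR
    _ = (dd + 1) * (R ^ 2) ^ (dd + 1) * (R * e) := by ring
    _ ≤ _ := by gcongr

lemma monomialEval_submatrix (a : K → Matrix (Fin N) (Fin N) ℂ) (dd : ℕ) (kk : ℕ → K)
    (D : ℕ → Matrix (Fin N) (Fin N) ℂ) (σ : Equiv.Perm (Fin N))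
    (hD : ∀ j, (D j).submatrix σ σ = D j) :
    monomialEval (fun k => (a k).submatrix σ σ) dd kk D =
      (monomialEval a dd kk D).submatrix σ σ := by
  have hφ : ∀ M, Matrix.reindexAlgEquiv ℂ ℂ σ.symm M = M.submatrix σ σ := fun M => rfl
  unfold monomialEval
  rw [← hφ, map_mul, map_list_prod, List.map_ofFn, hφ, hD]
  congr 3
  funext j
  rw [Function.comp_apply, map_mul, hφ, hφ, hD]

lemma norm_centeredProd_le {n : ℕ} (M : Fin n → Matrix (Fin N) (Fin N) ℂ) {B : ℝ} (hB : 0 ≤ B)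
    (hM : ∀ i, ‖M i‖ ≤ B) : ‖centeredProd M‖ ≤ (2 * B) ^ n :=
  norm_prod_ofFn_le _ (by positivity) fun i => (norm_sub_dproj_le _).trans (by gcongr; exact hM i)

lemma norm_centeredProd_sub_le {n : ℕ} (M M' : Fin n → Matrix (Fin N) (Fin N) ℂ) {B e : ℝ}
    (hB : 1 ≤ B) (hM : ∀ i, ‖M i‖ ≤ B) (hM' : ∀ i, ‖M' i‖ ≤ B) (he : 0 ≤ e)
    (hMM : ∀ i, ‖M i - M' i‖ ≤ e) :
    ‖centeredProd M - centeredProd M'‖ ≤ n * (2 * B) ^ n * (2 * e) := by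
  refine norm_prod_ofFn_sub_le _ _ (by linarith)
    (fun i => (norm_sub_dproj_le _).trans (by gcongr; exact hM i))
    (fun i => (norm_sub_dproj_le _).trans (by gcongr; exact hM' i)) (fun i => ?_) (by positivity)
  have : M i - dproj (M i) - (M' i - dproj (M' i)) = (M i - M' i) - dproj (M i - M' i) := by
    rw [dproj_sub]; abel
  rw [this]
  exact (norm_sub_dproj_le _).trans (by gcongr; exact hMM i)

lemma exists_quantizer (R : ℝ) {e : ℝ} (he : 0 < e) (hR : 0 ≤ R) :
    ∃ (T : Type) (_ : Fintype T) (b : ℂ → T) (r : T → ℂ), ∀ z, ‖z‖ ≤ R →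
      ‖r (b z)‖ ≤ R ∧ ‖z - r (b z)‖ ≤ e := by
  obtain ⟨t, hts, htf, hcov⟩ := (isCompact_closedBall (0 : ℂ) R).finite_cover_balls he
  have hex : ∀ z : ℂ, ∃ y : t, ‖z‖ ≤ R → ‖z - y‖ ≤ e := by
    intro z
    have key : ∀ z : ℂ, ‖z‖ ≤ R → ∃ y : t, ‖z - y‖ ≤ e := by
      intro z hz
      have := hcov (mem_closedBall_zero_iff.2 hz)
      simp only [Set.mem_iUnion, Metric.mem_ball, dist_eq_norm] at this
      obtain ⟨y, hy, h⟩ := this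
      exact ⟨⟨y, hy⟩, h.le⟩
    by_cases hz : ‖z‖ ≤ R
    · exact (key z hz).imp fun y h _ => h
    · exact (key 0 (by simpa using hR)).imp fun y _ h => absurd h hz
  choose b hb using hex
  exact ⟨t, htf.fintype, b, Subtype.val, fun z hz =>
    ⟨mem_closedBall_zero_iff.1 (hts (b z).2), hb z hz⟩⟩

/-- The permutation of the states `σ` which composes `σ ℓ` with the transposition of `j`, `c`. -/
def swapState {ι : Type} (ℓ : ι) (j c : Fin N) : Equiv.Perm (ι → Equiv.Perm (Fin N)) :=
  Equiv.mulRight (Pi.mulSingle ℓ (Equiv.swap j c))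

lemma isSwapLetter_monomialEval {ι Q : Type} (β : Fin N → Q) (ℓ : ι)
    (a : ι → K → Matrix (Fin N) (Fin N) ℂ) {dd dmax : ℕ} (hdd : dd ≤ dmax) (kk : ℕ → K)
    (v : ℕ → Q → ℂ) {R : ℝ} (hR : 1 ≤ R) (ha : ∀ ℓ k, ‖a ℓ k‖ ≤ R)
    (hD : ∀ j, ‖Matrix.diagonal fun i => v j (β i)‖ ≤ R) :
    IsSwapLetter (2 * (R ^ 2) ^ (dmax + 1)) β swapState
      (ℓ, fun σ : ι → Equiv.Perm (Fin N) =>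
        monomialEval (fun k => (a ℓ k).submatrix (σ ℓ) (σ ℓ)) dd kk
            (fun j => Matrix.diagonal fun i => v j (β i)) -
          dproj (monomialEval (fun k => (a ℓ k).submatrix (σ ℓ) (σ ℓ)) dd kk
            (fun j => Matrix.diagonal fun i => v j (β i)))) where
  norm_le σ := (norm_sub_dproj_le _).trans <| by
    gcongr
    exact norm_monomialEval_le _ hdd kk _ hR
      (fun k => (norm_submatrix_perm_le _ _).trans (ha ℓ k)) hD
  diag_eq_zero σ i := by simp [dproj]
  map_of_eq := by
    rintro _ j c σ hjc rfl
    have h1 : (swapState ℓ j c σ) ℓ = σ ℓ * Equiv.swap j c := by simp [swapState]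
    have h2 : ∀ m, (Matrix.diagonal fun i => v m (β i)).submatrix (Equiv.swap j c)
        (Equiv.swap j c) = Matrix.diagonal fun i => v m (β i) := by
      intro m
      rw [Matrix.submatrix_diagonal_equiv]
      congr 1
      funext i
      simp only [Function.comp_apply]
      rcases eq_or_ne i j with rfl | hij
      · simp [hjc]
      rcases eq_or_ne i c with rfl | hic
      · simp [hjc]
      · rw [Equiv.swap_apply_of_ne_of_ne hij hic]
    have h3 : ∀ k, (a ℓ k).submatrix (σ ℓ * Equiv.swap j c) (σ ℓ * Equiv.swap j c) =
        ((a ℓ k).submatrix (σ ℓ) (σ ℓ)).submatrix (Equiv.swap j c) (Equiv.swap j c) := by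
      intro k
      rw [Matrix.submatrix_submatrix]
      rfl
    simp only [h1, h3]
    rw [monomialEval_submatrix (fun k => (a ℓ k).submatrix (σ ℓ) (σ ℓ)) dd kk _ _ h2,
      dproj_submatrix, Matrix.submatrix_sub]
    rfl
  map_of_ne := by
    intro ℓ' j c σ _ hne
    have h1 : (swapState ℓ' j c σ) ℓ = σ ℓ := by
      simp [swapState, Pi.mulSingle_eq_of_ne (show ℓ ≠ ℓ' from hne)]
    simp only [h1]

end Monomials

section Averaging

open scoped Matrix.Norms.L2Operator

/-- The centred product of the monomials `P_i` evaluated at the families `a (ℓv i)`. -/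
def centeredMonomialProd {K : Type} {n L N : ℕ} (ℓv : Fin n → Fin L) (dv : Fin n → ℕ)
    (kv : Fin n → ℕ → K) (D : Fin n → ℕ → Matrix (Fin N) (Fin N) ℂ)
    (a : Fin L → K → Matrix (Fin N) (Fin N) ℂ) : Matrix (Fin N) (Fin N) ℂ :=
  centeredProd fun i => monomialEval (fun k => a (ℓv i) k) (dv i) (kv i) (D i)

/-- Uniformly over bounded deterministic families, averaging over independent permutations of the
families makes the diagonal of an alternating centred product small in quadratic mean. -/
lemma eventually_sum_perm_le {n L : ℕ} (hn : n ≠ 0) {ℓv : Fin n → Fin L}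
    (hadj : ∀ (i : ℕ) (h1 : i + 1 < n), ℓv ⟨i, Nat.lt_of_succ_lt h1⟩ ≠ ℓv ⟨i + 1, h1⟩)
    (K : Type) (dmax : ℕ) {R : ℝ} (hR : 1 ≤ R) {ε : ℝ} (hε : 0 < ε) :
    ∀ᶠ N : ℕ in atTop, ∀ (dv : Fin n → ℕ) (kv : Fin n → ℕ → K)
      (D : Fin n → ℕ → Matrix (Fin N) (Fin N) ℂ) (a : Fin L → K → Matrix (Fin N) (Fin N) ℂ),
      (∀ i, dv i ≤ dmax) → (∀ i j, (D i j).IsDiag) → (∀ i j, ‖D i j‖ ≤ R) →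
      (∀ ℓ k, ‖a ℓ k‖ ≤ R) →
      ∑ σ : Fin L → Equiv.Perm (Fin N), ∑ x, ‖centeredMonomialProd ℓv dv kv D
        (fun ℓ k => (a ℓ k).submatrix (σ ℓ) (σ ℓ)) x x‖ ^ 2 ≤
        ε * (Fintype.card (Fin L → Equiv.Perm (Fin N)) * N) := by
  have hR0 : 0 ≤ R := by linarith
  set B := (R ^ 2) ^ (dmax + 1) with hBdef
  have hB : 1 ≤ B := one_le_pow₀ (one_le_pow₀ hR)
  set c := n * (2 * B) ^ n * (2 * ((dmax + 1) * B * R)) with hc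
  have hc0 : 0 ≤ c := by positivity
  obtain ⟨e, he, hce⟩ : ∃ e > 0, 2 * (c * e) ^ 2 ≤ ε / 2 := by
    have h1 : Tendsto (fun e : ℝ => 2 * (c * e) ^ 2) (nhdsWithin 0 (Set.Ioi 0)) (nhds 0) := by
      have : Continuous (fun e : ℝ => 2 * (c * e) ^ 2) := by fun_prop
      simpa using (this.tendsto 0).mono_left nhdsWithin_le_nhds
    obtain ⟨e, h, he⟩ := ((h1.eventually (gt_mem_nhds (half_pos hε))).and
      self_mem_nhdsWithin).exists
    exact ⟨e, he, h.le⟩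
  obtain ⟨T, _, b, r, hbr⟩ := exists_quantizer R he hR0
  filter_upwards [eventually_diagSq_le (C := 2 * B) (by linarith)
    (Fintype.card (Fin n × Fin (dmax + 1) → T)) n (ε / 4) (by positivity)] with N hN
  intro dv kv D a hdv hdiag hD ha
  set E := Fintype.equivFin (Fin n × Fin (dmax + 1) → T)
  set β : Fin N → Fin (Fintype.card (Fin n × Fin (dmax + 1) → T)) :=
    fun x => E fun ij => b (D ij.1 ij.2 x x) with hβ
  set w : Fin n → ℕ → Fin (Fintype.card (Fin n × Fin (dmax + 1) → T)) → ℂ :=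
    fun i j z => r (E.symm z (i, ⟨min j dmax, by omega⟩)) with hw
  have hwβ : ∀ i j x, w i j (β x) = r (b (D i (min j dmax) x x)) := by
    intro i j x
    simp [hw, hβ]
  set D' : Fin n → ℕ → Matrix (Fin N) (Fin N) ℂ :=
    fun i j => Matrix.diagonal fun x => w i j (β x) with hD'
  have hent : ∀ i j x, ‖D i j x x‖ ≤ R := fun i j x =>
    (norm_apply_le_l2_opNorm _ _ _).trans (hD i j)
  have hD'R : ∀ i j, ‖D' i j‖ ≤ R := by
    intro i j
    rw [hD', Matrix.l2_opNorm_diagonal]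
    refine (pi_norm_le_iff_of_nonneg hR0).2 fun x => ?_
    rw [hwβ]
    exact (hbr _ (hent _ _ _)).1
  have hDD' : ∀ i, ∀ j ≤ dv i, ‖D i j - D' i j‖ ≤ e := by
    intro i j hj
    have h1 : D i j - D' i j = Matrix.diagonal fun x => D i j x x - w i j (β x) := by
      rw [← Matrix.diagonal_sub, hD']
      congr 1
      exact ((hdiag i j).diagonal_diag).symm
    rw [h1, Matrix.l2_opNorm_diagonal]
    refine (pi_norm_le_iff_of_nonneg he.le).2 fun x => ?_
    rw [hwβ, min_eq_left (hj.trans (hdv i))]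
    exact (hbr _ (hent _ _ _)).2
  set u : List (Fin L × ((Fin L → Equiv.Perm (Fin N)) → Matrix (Fin N) (Fin N) ℂ)) :=
    List.ofFn fun i => (ℓv i, fun σ =>
      monomialEval (fun k => (a (ℓv i) k).submatrix (σ (ℓv i)) (σ (ℓv i))) (dv i) (kv i) (D' i) -
      dproj (monomialEval (fun k => (a (ℓv i) k).submatrix (σ (ℓv i)) (σ (ℓv i)))
        (dv i) (kv i) (D' i))) with hu
  have hdiagSq := hN β (Fin L) (Fin L → Equiv.Perm (Fin N)) swapState u (by simp [hu])
    (by simp [hu, List.ofFn_eq_nil_iff, hn])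
    (by rw [hu, List.isChain_ofFn]; exact hadj)
    (by
      intro x hx
      rw [hu, List.mem_ofFn] at hx
      obtain ⟨i, rfl⟩ := hx
      exact isSwapLetter_monomialEval β (ℓv i) a (hdv i) (kv i) (w i) hR ha (hD'R i))
  have hprod : ∀ σ, wordProd u σ = centeredMonomialProd ℓv dv kv D'
      (fun ℓ k => (a ℓ k).submatrix (σ ℓ) (σ ℓ)) := by
    intro σ
    rw [wordProd, hu, List.map_ofFn]
    rfl
  have hclose : ∀ σ : Fin L → Equiv.Perm (Fin N),
      ‖centeredMonomialProd ℓv dv kv D (fun ℓ k => (a ℓ k).submatrix (σ ℓ) (σ ℓ)) -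
        centeredMonomialProd ℓv dv kv D' (fun ℓ k => (a ℓ k).submatrix (σ ℓ) (σ ℓ))‖ ≤ c * e := by
    intro σ
    have ha' : ∀ ℓ k, ‖(a ℓ k).submatrix (σ ℓ) (σ ℓ)‖ ≤ R := fun ℓ k =>
      (norm_submatrix_perm_le _ _).trans (ha ℓ k)
    refine (norm_centeredProd_sub_le _ _ (e := (dmax + 1) * B * (R * e)) hB
      (fun i => norm_monomialEval_le _ (hdv i) _ _ hR (ha' _) (hD i))
      (fun i => norm_monomialEval_le _ (hdv i) _ _ hR (ha' _) (hD'R i)) (by positivity)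
      (fun i => norm_monomialEval_sub_le _ (hdv i) _ _ _ hR (ha' _) (hD i) (hD'R i) he.le
        (hDD' i))).trans (le_of_eq ?_)
    rw [hc]
    ring
  have hpt : ∀ (σ : Fin L → Equiv.Perm (Fin N)) (x : Fin N), ‖centeredMonomialProd ℓv dv kv D
      (fun ℓ k => (a ℓ k).submatrix (σ ℓ) (σ ℓ)) x x‖ ^ 2 ≤
      2 * ‖wordProd u σ x x‖ ^ 2 + ε / 2 := by
    intro σ x
    rw [hprod]
    have h1 := (norm_apply_le_l2_opNorm _ x x).trans (hclose σ)
    rw [Matrix.sub_apply] at h1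
    set z := centeredMonomialProd ℓv dv kv D (fun ℓ k => (a ℓ k).submatrix (σ ℓ) (σ ℓ)) x x
    set z' := centeredMonomialProd ℓv dv kv D' (fun ℓ k => (a ℓ k).submatrix (σ ℓ) (σ ℓ)) x x
    have h2 : ‖z‖ ≤ ‖z'‖ + c * e := by
      have := norm_add_le z' (z - z')
      rw [add_sub_cancel] at this
      linarith
    have h3 : ‖z‖ ^ 2 ≤ (‖z'‖ + c * e) ^ 2 := pow_le_pow_left₀ (norm_nonneg _) h2 2
    nlinarith [sq_nonneg (‖z'‖ - c * e)]
  calc _ ≤ ∑ σ : Fin L → Equiv.Perm (Fin N), ∑ x : Fin N, (2 * ‖wordProd u σ x x‖ ^ 2 + ε / 2) :=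
        Finset.sum_le_sum fun σ _ => Finset.sum_le_sum fun x _ => hpt σ x
    _ = 2 * diagSq u + ε / 2 * (Fintype.card (Fin L → Equiv.Perm (Fin N)) * N) := by
        simp only [Finset.sum_add_distrib, ← Finset.mul_sum, Finset.sum_const, Finset.card_univ,
          Fintype.card_fin, nsmul_eq_mul, diagSq]
        ring
    _ ≤ _ := by linarith

end Averaging

section Randomness

variable {Ω K : Type} [MeasurableSpace Ω] {N L : ℕ}

lemma continuous_prod_ofFn {X M : Type*} [TopologicalSpace X] [TopologicalSpace M] [Monoid M]
    [ContinuousMul M] {m : ℕ} {f : Fin m → X → M} (hf : ∀ i, Continuous (f i)) :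
    Continuous fun x => (List.ofFn fun i => f i x).prod := by
  induction m with
  | zero => simpa using continuous_const
  | succ m ih =>
    simp only [List.ofFn_succ, List.prod_cons]
    exact (hf 0).mul (ih fun i => hf i.succ)

lemma continuous_centeredMonomialProd {n : ℕ} (ℓv : Fin n → Fin L) (dv : Fin n → ℕ)
    (kv : Fin n → ℕ → K) (D : Fin n → ℕ → Matrix (Fin N) (Fin N) ℂ) :
    Continuous (centeredMonomialProd ℓv dv kv D) := by
  have hM : ∀ i, Continuous fun a : Fin L → K → Matrix (Fin N) (Fin N) ℂ =>
      monomialEval (fun k => a (ℓv i) k) (dv i) (kv i) (D i) := by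
    intro i
    refine continuous_const.mul (continuous_prod_ofFn fun j => ?_)
    exact Continuous.mul (by fun_prop) continuous_const
  refine continuous_prod_ofFn fun i => (hM i).sub ?_
  simp only [dproj_eq_diagonal]
  exact Continuous.matrix_diagonal (by
    refine continuous_pi fun x => ?_
    exact (hM i).matrix_elem x x)

lemma measurable_sum_norm_sq_centeredMonomialProd [Countable K] {n : ℕ} (ℓv : Fin n → Fin L)
    (dv : Fin n → ℕ) (kv : Fin n → ℕ → K) (D : Fin n → ℕ → Matrix (Fin N) (Fin N) ℂ) :
    Measurable fun a : Fin L → K → Fin N → Fin N → ℂ =>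
      ∑ x, ‖centeredMonomialProd ℓv dv kv D (fun ℓ k => Matrix.of (a ℓ k)) x x‖ ^ 2 := by
  have : OpensMeasurableSpace (K → Fin N → Fin N → ℂ) := Pi.opensMeasurableSpace
  refine Continuous.measurable (continuous_finsetSum _ fun x _ => ?_)
  exact (((continuous_centeredMonomialProd ℓv dv kv D).matrix_elem x x).norm).pow 2

/-- The joint law of independent permutation invariant families is invariant under independent
permutations of the families. -/
lemma map_perm_eq_map {μ : Measure Ω} [IsProbabilityMeasure μ]
    (A : Fin L → K → Ω → Matrix (Fin N) (Fin N) ℂ) (hmeas : ∀ ℓ k, EntriesMeasurable (A ℓ k))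
    (hindep : iIndep (fun ℓ => famSigma (A ℓ)) μ) (hperm : ∀ ℓ, PermInvariant μ (A ℓ))
    (σ : Fin L → Equiv.Perm (Fin N)) :
    Measure.map (fun ω ℓ k i j => A ℓ k ω (σ ℓ i) (σ ℓ j)) μ =
      Measure.map (fun ω ℓ k i j => A ℓ k ω i j) μ := by
  have hX : ∀ τ : Fin L → Equiv.Perm (Fin N), ∀ ℓ,
      Measurable fun ω k i j => A ℓ k ω (τ ℓ i) (τ ℓ j) := by
    intro τ ℓ
    exact measurable_pi_lambda _ fun k => measurable_pi_lambda _ fun i =>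
      measurable_pi_lambda _ fun j => hmeas ℓ k _ _
  have hind : ∀ τ : Fin L → Equiv.Perm (Fin N),
      iIndepFun (fun ℓ ω k i j => A ℓ k ω (τ ℓ i) (τ ℓ j)) μ := by
    intro τ
    refine iIndep_of_iIndep_of_le hindep fun ℓ => ?_
    refine Measurable.comap_le (m₁ := famSigma (A ℓ)) ?_
    refine @measurable_pi_lambda _ _ _ (famSigma (A ℓ)) _ _ fun k =>
      @measurable_pi_lambda _ _ _ (famSigma (A ℓ)) _ _ fun i =>
      @measurable_pi_lambda _ _ _ (famSigma (A ℓ)) _ _ fun j => ?_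
    refine Measurable.of_comap_le ?_
    exact le_iSup_of_le k (le_iSup_of_le (τ ℓ i) (le_iSup_of_le (τ ℓ j) le_rfl))
  have h1 := (iIndepFun_iff_map_fun_eq_pi_map fun ℓ => (hX σ ℓ).aemeasurable).1 (hind σ)
  have h2 := (iIndepFun_iff_map_fun_eq_pi_map fun ℓ => (hX 1 ℓ).aemeasurable).1 (hind 1)
  have h3 : Measure.map (fun ω ℓ k i j => A ℓ k ω i j) μ =
      Measure.pi fun ℓ => Measure.map (fun ω k i j => A ℓ k ω i j) μ := h2
  rw [h1, h3]
  congr 1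
  funext ℓ
  exact hperm ℓ (σ ℓ)

open scoped Matrix.Norms.L2Operator in
lemma lintegral_le_of_sum_perm_le [Countable K] {μ : Measure Ω} [IsProbabilityMeasure μ]
    (A : Fin L → K → Ω → Matrix (Fin N) (Fin N) ℂ) (hmeas : ∀ ℓ k, EntriesMeasurable (A ℓ k))
    (hindep : iIndep (fun ℓ => famSigma (A ℓ)) μ) (hperm : ∀ ℓ, PermInvariant μ (A ℓ))
    {G : (Fin L → K → Fin N → Fin N → ℂ) → ℝ} (hG : Measurable G) (hG0 : ∀ a, 0 ≤ G a)
    {R t : ℝ} (hA : ∀ ℓ k, ∀ᵐ ω ∂μ, ‖A ℓ k ω‖ ≤ R)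
    (hsum : ∀ a : Fin L → K → Matrix (Fin N) (Fin N) ℂ, (∀ ℓ k, ‖a ℓ k‖ ≤ R) →
      ∑ σ : Fin L → Equiv.Perm (Fin N), G (fun ℓ k i j => a ℓ k (σ ℓ i) (σ ℓ j)) ≤
        t * Fintype.card (Fin L → Equiv.Perm (Fin N))) :
    ∫⁻ ω, ENNReal.ofReal (G fun ℓ k i j => A ℓ k ω i j) ∂μ ≤ ENNReal.ofReal t := by
  set S := Fin L → Equiv.Perm (Fin N)
  have hX : ∀ τ : S, Measurable fun ω ℓ k i j => A ℓ k ω (τ ℓ i) (τ ℓ j) := by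
    intro τ
    exact measurable_pi_lambda _ fun ℓ => measurable_pi_lambda _ fun k =>
      measurable_pi_lambda _ fun i => measurable_pi_lambda _ fun j => hmeas ℓ k _ _
  have hGm : Measurable fun a => ENNReal.ofReal (G a) := hG.ennreal_ofReal
  have hτ : ∀ τ : S, ∫⁻ ω, ENNReal.ofReal (G fun ℓ k i j => A ℓ k ω (τ ℓ i) (τ ℓ j)) ∂μ =
      ∫⁻ ω, ENNReal.ofReal (G fun ℓ k i j => A ℓ k ω i j) ∂μ := by
    intro τ
    have h1 := lintegral_map (μ := μ) hGm (hX τ)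
    have h2 := lintegral_map (μ := μ) hGm (hX 1)
    rw [map_perm_eq_map A hmeas hindep hperm τ] at h1
    exact h1.symm.trans h2
  have hcard : (Fintype.card S : ℝ≥0∞) ≠ 0 := by
    simp
  have hae : ∀ᵐ ω ∂μ, ∀ ℓ k, ‖A ℓ k ω‖ ≤ R := by
    rw [ae_all_iff]
    exact fun ℓ => ae_all_iff.2 (hA ℓ)
  have key : Fintype.card S * ∫⁻ ω, ENNReal.ofReal (G fun ℓ k i j => A ℓ k ω i j) ∂μ ≤
      Fintype.card S * ENNReal.ofReal t := by
    calc _ = ∑ τ : S, ∫⁻ ω, ENNReal.ofReal (G fun ℓ k i j => A ℓ k ω (τ ℓ i) (τ ℓ j)) ∂μ := by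
          simp [hτ]
      _ = ∫⁻ ω, ∑ τ : S, ENNReal.ofReal (G fun ℓ k i j => A ℓ k ω (τ ℓ i) (τ ℓ j)) ∂μ :=
          (lintegral_finsetSum _ fun τ _ => hGm.comp (hX τ)).symm
      _ ≤ ∫⁻ _, Fintype.card S * ENNReal.ofReal t ∂μ := by
          refine lintegral_mono_ae ?_
          filter_upwards [hae] with ω hω
          rw [← ENNReal.ofReal_sum_of_nonneg fun _ _ => hG0 _, ← ENNReal.ofReal_natCast,
            ← ENNReal.ofReal_mul (by positivity), mul_comm]
          exact ENNReal.ofReal_le_ofReal (hsum (fun ℓ k => A ℓ k ω) hω)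
      _ = _ := by simp
  exact (ENNReal.mul_le_mul_iff_right hcard (ENNReal.natCast_ne_top _)).1 key

lemma re_trace_dproj_pow (F : Matrix (Fin N) (Fin N) ℂ) (p : ℕ) :
    (Matrix.trace ((dproj F * (dproj F)ᴴ) ^ p)).re = ∑ i, (‖F i i‖ ^ 2) ^ p := by
  rw [dproj_eq_diagonal, Matrix.diagonal_conjTranspose, Matrix.diagonal_mul_diagonal,
    Matrix.diagonal_pow, Matrix.trace_diagonal, Complex.re_sum]
  refine Finset.sum_congr rfl fun i _ => ?_
  simp only [Pi.pow_apply, Pi.star_apply, RCLike.star_def, Complex.mul_conj, Complex.normSq_eq_norm_sq]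
  norm_cast

end Randomness

/-- Theorem 1.2, convergence in probability.
Under the hypotheses of Statement 0, the normalized Schatten norms of `ε_N`
converge to zero in probability: for every `p ≥ 1` and every `δ > 0`,
`P[(1/N) Tr((ε_N ε_N^*)^p) > δ] → 0` as `N → ∞`. -/
theorem asymptotically_free_amalg_diagonal_in_probability
    {Ω : Type} [MeasurableSpace Ω] (μ : Measure Ω) [IsProbabilityMeasure μ]
    {K : Type} [Nonempty K] [Finite K] {L : ℕ} (hL : 1 ≤ L)
    (A : (N : ℕ) → Fin L → K → Ω → Matrix (Fin N) (Fin N) ℂ)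
    (hmeas : ∀ N ℓ k, EntriesMeasurable (A N ℓ k))
    (hop : UnifOpNormBound μ A)
    (hindep : IndepFamilies μ A)
    (hperm : ∀ (N : ℕ) (ℓ : Fin L), PermInvariant μ (A N ℓ))
    (n : ℕ) (hn : 2 ≤ n) (ℓv : Fin n → Fin L)
    (hadj : ∀ (i : ℕ) (h1 : i + 1 < n),
      ℓv ⟨i, Nat.lt_of_succ_lt h1⟩ ≠ ℓv ⟨i + 1, h1⟩)
    (dv : ℕ → Fin n → ℕ) (kv : ℕ → Fin n → ℕ → K)
    (D : (N : ℕ) → Fin n → ℕ → Matrix (Fin N) (Fin N) ℂ)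
    (hdiag : ∀ N i j, (D N i j).IsDiag)
    (dmax : ℕ) (hdeg : ∀ N i, dv N i ≤ dmax)
    (C' : ℝ) (hDbdd : ∀ N i j, matOpNorm (D N i j) ≤ C')
    (p : ℕ) (hp : 1 ≤ p) (δ : ℝ) (hδ : 0 < δ) :
    Filter.Tendsto
      (fun N : ℕ => μ {ω : Ω | δ <
        ((fun ε : Matrix (Fin N) (Fin N) ℂ => Matrix.trace ((ε * εᴴ) ^ p))
            (dproj (centeredProd fun i : Fin n =>
              monomialEval (fun k => A N (ℓv i) k ω) (dv N i) (kv N i) (D N i)))).re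
          / N})
      atTop (nhds 0) := by
  open scoped Matrix.Norms.L2Operator in
  obtain ⟨C, hC⟩ := hop
  set R := max 1 (max C C')
  have hR : 1 ≤ R := le_max_left _ _
  have hDR : ∀ N i j, ‖D N i j‖ ≤ R := fun N i j =>
    (hDbdd N i j).trans ((le_max_right _ _).trans (le_max_right _ _))
  have hAR : ∀ N ℓ k, ∀ᵐ ω ∂μ, ‖A N ℓ k ω‖ ≤ R := fun N ℓ k => (hC N ℓ k).mono fun ω h =>
    LE.le.trans h ((le_max_left _ _).trans (le_max_right _ _))
  set B := (2 * (R ^ 2) ^ (dmax + 1)) ^ n with hB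
  have hB0 : 0 < B := by positivity
  set κ := (B ^ 2) ^ (p - 1) with hκdef
  have hκ : 0 < κ := by positivity
  rw [ENNReal.tendsto_nhds_zero]
  intro s hs
  obtain ⟨t, ht0, hts⟩ : ∃ t : ℝ, 0 < t ∧ ENNReal.ofReal t ≤ s := by
    obtain ⟨r, hr0, hrs⟩ := ENNReal.lt_iff_exists_nnreal_btwn.1 hs
    exact ⟨r, by simpa using hr0, by simpa using hrs.le⟩
  filter_upwards [eventually_sum_perm_le (show n ≠ 0 by omega) hadj K dmax hR
    (show 0 < t * (δ / κ) by positivity), eventually_gt_atTop 0] with N hN hN0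
  have hN0' : (0 : ℝ) < N := by exact_mod_cast hN0
  set G : (Fin L → K → Fin N → Fin N → ℂ) → ℝ := fun a =>
    ∑ x, ‖centeredMonomialProd ℓv (dv N) (kv N) (D N) (fun ℓ k => Matrix.of (a ℓ k)) x x‖ ^ 2
    with hGdef
  have hGm : Measurable G := measurable_sum_norm_sq_centeredMonomialProd ℓv (dv N) (kv N) (D N)
  have hbound_lintegral := lintegral_le_of_sum_perm_le (A N) (hmeas N) (hindep N) (hperm N) hGm
    (fun a => Finset.sum_nonneg fun _ _ => by positivity) (R := R) (t := t * (δ / κ) * N)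
    (hAR N) (fun a ha => by
      refine (hN (dv N) (kv N) (D N) a (hdeg N) (hdiag N) (hDR N) ha).trans (le_of_eq ?_)
      ring)
  have hae : ∀ᵐ ω ∂μ, ∀ ℓ k, ‖A N ℓ k ω‖ ≤ R := by
    rw [ae_all_iff]
    exact fun ℓ => ae_all_iff.2 (hAR N ℓ)
  have hsub : μ {ω : Ω | δ <
        ((fun ε : Matrix (Fin N) (Fin N) ℂ => Matrix.trace ((ε * εᴴ) ^ p))
            (dproj (centeredProd fun i : Fin n =>
              monomialEval (fun k => A N (ℓv i) k ω) (dv N i) (kv N i) (D N i)))).re / N} ≤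
      μ {ω | ENNReal.ofReal (δ / κ * N) ≤ ENNReal.ofReal (G fun ℓ k i j => A N ℓ k ω i j)} := by
    refine measure_mono_ae ?_
    filter_upwards [hae] with ω hω h
    refine ENNReal.ofReal_le_ofReal ?_
    replace h : δ < _ / (N : ℝ) := h
    simp only [re_trace_dproj_pow] at h
    rw [lt_div_iff₀ hN0'] at h
    rw [div_mul_eq_mul_div, div_le_iff₀ hκ]
    refine h.le.trans ?_
    rw [hGdef, Finset.sum_mul]
    refine Finset.sum_le_sum fun x _ => ?_
    set F := centeredProd fun i : Fin n =>
      monomialEval (fun k => A N (ℓv i) k ω) (dv N i) (kv N i) (D N i)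
    have hF : ‖F x x‖ ≤ B := (norm_apply_le_l2_opNorm F x x).trans
      (norm_centeredProd_le _ (by positivity) fun i =>
        norm_monomialEval_le _ (hdeg N i) _ _ hR (hω _) (hDR N i))
    change _ ≤ ‖F x x‖ ^ 2 * κ
    obtain ⟨m, rfl⟩ : ∃ m, p = m + 1 := ⟨p - 1, by omega⟩
    rw [pow_succ', hκdef, Nat.add_sub_cancel]
    gcongr
  refine hsub.trans (le_trans ?_ hts)
  have hpos : 0 < δ / κ * N := by positivity
  refine (meas_ge_le_lintegral_div ?_ (ENNReal.ofReal_pos.2 hpos).ne'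
    ENNReal.ofReal_ne_top).trans ?_
  · refine (hGm.ennreal_ofReal.comp (?_ : Measurable fun ω ℓ k i j => A N ℓ k ω i j)).aemeasurable
    exact measurable_pi_lambda _ fun ℓ => measurable_pi_lambda _ fun k =>
      measurable_pi_lambda _ fun i => measurable_pi_lambda _ fun j => hmeas N ℓ k _ _
  · refine (ENNReal.div_le_div_right hbound_lintegral _).trans ?_
    rw [← ENNReal.ofReal_div_of_pos hpos]
    refine ENNReal.ofReal_le_ofReal (le_of_eq ?_)
    field_simp
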